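/- Let 𝒫 ⊂ ℝ^d be a polytope of dimension d ≥ 3 and let x be a point in the exterior of 𝒫 (i.e. x ∉ 𝒫). Then the following are equivalent: (i) for every line L through x that meets two disjoint faces F and G of 𝒫 at points u ∈ F and v ∈ G, at least one of u and v lies in the relative interior of a facet of 𝒫; (ii) x does not lie on the affine hull of any facet of 𝒫, and either x is beyond all facets of 𝒫 except exactly one, or x is beneath all facets of 𝒫 except exactly one. -/

import Mathlib

namespace BoydMaxwell

variable {E : Type*} [NormedAddCommGroup E] [NormedSpace ℝ E]

/-- A facet of the polytope `P`: an exposed face whose affine span has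
codimension `1` (i.e. dimension `dim E − 1`). -/
def IsFacet (P F : Set E) : Prop :=
  IsExposed ℝ P F ∧
    Module.finrank ℝ (affineSpan ℝ F).direction + 1 = Module.finrank ℝ E

/-- `x` is beyond the facet `F` of `P`: `x` and the interior of `P` lie
strictly on opposite sides of the affine hull of `F`. -/
def Beyond (P F : Set E) (x : E) : Prop :=
  ∀ y ∈ interior P, (affineSpan ℝ F).SOppSide x y

/-- `x` is beneath the facet `F` of `P`: `x` and the interior of `P` lie
strictly on the same side of the affine hull of `F`. -/
def Beneath (P F : Set E) (x : E) : Prop :=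
  ∀ y ∈ interior P, (affineSpan ℝ F).SSameSide x y

/-!
Translate `x` to the origin and describe `P` by one inequality `l ≤ c` per facet, so that `c > 0`
when `x` is beneath the facet, `c < 0` when it is beyond and `c = 0` when it lies on its hyperplane.
If no `c` vanishes, a ray from `x` enters `P` through facets with `c < 0` and leaves it through
facets with `c > 0`. So if one of the two classes has a single member, the corresponding end of each
chord lies on one facet only.

Conversely, suppose both classes have at least two members. The rays whose entry point lies on two
facets with `c < 0`, and those whose exit point lies on two facets with `c > 0`, form the creases of
two piecewise linear envelopes. Inside a hyperplane, of dimension at least two, each crease bounds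
a convex set, and connectedness of frontiers of convex sets yields a ray on both creases. Among all
such rays choose one minimising the ratio of the distances from `x` to the entry and exit points:
if the minimal faces of the two points had a common point `w`, moving both points away from `w`
would decrease the ratio. These faces are therefore disjoint, while neither point lies in the
relative interior of a facet. The same minimisation, over chords inside a facet whose hyperplane
contains `x`, excludes `c = 0`.
-/

section LinearInequalities

open Set Filter Topology

lemma finrank_ker_add_one [FiniteDimensional ℝ E] {l : E →L[ℝ] ℝ} (hl : l ≠ 0) :
    Module.finrank ℝ (LinearMap.ker (l : E →ₗ[ℝ] ℝ)) + 1 = Module.finrank ℝ E :=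
  Module.Dual.finrank_ker_add_one_of_ne_zero fun h =>
    hl (ContinuousLinearMap.coe_injective h)

variable {ι : Type*} {l : ι → E →L[ℝ] ℝ} {c : ι → ℝ}

/-- The solution set of the system of linear inequalities `l i w ≤ c i`. -/
def polyhedron (l : ι → E →L[ℝ] ℝ) (c : ι → ℝ) : Set E :=
  {w | ∀ i, l i w ≤ c i}

/-- The indices of the inequalities `l i w ≤ c i` that are tight at `w`; on a polyhedron, larger
active sets correspond to smaller faces. -/
def activeSet (l : ι → E →L[ℝ] ℝ) (c : ι → ℝ) (w : E) : Set ι :=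
  {i | l i w = c i}

lemma convex_polyhedron : Convex ℝ (polyhedron l c) := by
  intro u hu w hw a b ha hb hab i
  calc l i (a • u + b • w) = a * l i u + b * l i w := by simp
    _ ≤ a * c i + b * c i := by gcongr <;> [exact hu i; exact hw i]
    _ = c i := by rw [← add_mul, hab, one_mul]

lemma isClosed_polyhedron : IsClosed (polyhedron l c) := by
  simp only [polyhedron, ofPred_forall]
  exact isClosed_iInter fun i => isClosed_le (l i).continuous continuous_const

lemma inter_subset_activeSet_add_smul {u w : E} {a b : ℝ} (hab : a + b = 1) :
    activeSet l c u ∩ activeSet l c w ⊆ activeSet l c (a • u + b • w) := by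
  rintro i ⟨hu : l i u = c i, hw : l i w = c i⟩
  change l i (a • u + b • w) = c i
  rw [map_add, map_smul, map_smul, hu, hw, ← add_smul, hab, one_smul]

lemma isClosed_setOf_activeSet_mem [Finite ι] {𝒜 : Set (Set ι)} (h𝒜 : IsUpperSet 𝒜) :
    IsClosed {w | activeSet l c w ∈ 𝒜} := by
  have h_union : {w | activeSet l c w ∈ 𝒜} = ⋃ S ∈ 𝒜, ⋂ i ∈ S, {w | l i w = c i} := by
    ext w
    simp only [mem_iUnion, mem_iInter, exists_prop]
    exact ⟨fun hw => ⟨_, hw, fun i hi => hi⟩, fun ⟨S, hS, hSw⟩ => h𝒜 (fun i hi => hSw i hi) hS⟩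
  rw [h_union]
  exact (toFinite 𝒜).isClosed_biUnion fun S _ => isClosed_biInter fun i _ =>
    isClosed_eq (l i).continuous continuous_const

lemma isExposed_setOf_subset_activeSet [Finite ι] (S : Set ι) :
    IsExposed ℝ (polyhedron l c) {w ∈ polyhedron l c | S ⊆ activeSet l c w} := by
  rintro ⟨w₀, hw₀, hw₀S⟩
  have := Fintype.ofFinite S
  refine ⟨∑ i : S, l i, ?_⟩
  ext w
  simp only [mem_ofPred_eq, sum_apply]
  refine and_congr_right fun hw => ⟨fun hwS y hy => ?_, fun h_max i hi => ?_⟩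
  · exact Finset.sum_le_sum fun i _ => (hy i).trans_eq (hwS i.2).symm
  · have h_le : ∀ k ∈ (Finset.univ : Finset S), l k w ≤ l k w₀ :=
      fun k _ => (hw k).trans_eq (hw₀S k.2).symm
    have h_eq := (Finset.sum_eq_sum_iff_of_le h_le).1
      ((Finset.sum_le_sum h_le).antisymm (h_max w₀ hw₀)) ⟨i, hi⟩ (Finset.mem_univ _)
    exact h_eq.trans (hw₀S hi)

lemma eventually_add_smul_sub_mem_polyhedron [Finite ι] {u w : E} (hu : u ∈ polyhedron l c)
    (huw : activeSet l c u ⊆ activeSet l c w) :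
    ∀ᶠ ε in 𝓝[>] (0 : ℝ), u + ε • (u - w) ∈ polyhedron l c := by
  simp only [polyhedron, mem_ofPred_eq, eventually_all]
  intro i
  rcases (hu i).lt_or_eq with hi | hi
  · have h_cont : Tendsto (fun ε : ℝ => l i (u + ε • (u - w))) (𝓝 0) (𝓝 (l i u)) :=
      Continuous.tendsto' (by fun_prop) _ _ (by simp)
    exact (h_cont.mono_left nhdsWithin_le_nhds |>.eventually_lt_const hi).mono fun _ => le_of_lt
  · have hw : l i w = c i := huw hi
    exact Eventually.of_forall fun ε => by simp [hi, hw]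

lemma mem_of_isExtreme_of_activeSet_subset [Finite ι] {F : Set E}
    (hF : IsExtreme ℝ (polyhedron l c) F) {u w : E} (hu : u ∈ F) (hw : w ∈ polyhedron l c)
    (huw : activeSet l c u ⊆ activeSet l c w) : w ∈ F := by
  obtain ⟨ε, hε_mem, hε : 0 < ε⟩ := ((eventually_add_smul_sub_mem_polyhedron (hF.1 hu) huw).and
    self_mem_nhdsWithin).exists
  refine hF.2 hw hε_mem hu
    ⟨(1 + ε)⁻¹ * ε, (1 + ε)⁻¹, by positivity, by positivity, by field_simp; ring, ?_⟩
  calc ((1 + ε)⁻¹ * ε) • w + (1 + ε)⁻¹ • (u + ε • (u - w)) = (1 + ε)⁻¹ • (1 + ε) • u := by module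
    _ = u := inv_smul_smul₀ (by positivity) u

lemma eq_of_mem_extremePoints_of_activeSet_subset [Finite ι] {u w : E}
    (hu : u ∈ (polyhedron l c).extremePoints ℝ) (huw : activeSet l c u ⊆ activeSet l c w) :
    w = u := by
  have h_reflect : activeSet l c u ⊆ activeSet l c (u + (u - w)) := fun i hi => by
    have hui : l i u = c i := hi
    have hwi : l i w = c i := huw hi
    simp [activeSet, hui, hwi]
  obtain ⟨ε, ⟨h_add, h_sub⟩, hε : 0 < ε⟩ := ((eventually_add_smul_sub_mem_polyhedron hu.1 huw).and
    (eventually_add_smul_sub_mem_polyhedron hu.1 h_reflect) |>.and self_mem_nhdsWithin).exists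
  have h_mid : u ∈ openSegment ℝ (u + ε • (u - w)) (u + ε • (u - (u + (u - w)))) :=
    ⟨1 / 2, 1 / 2, by norm_num, by norm_num, by norm_num, by module⟩
  have h_eq := hu.2 h_add h_sub h_mid
  rw [add_eq_left, smul_eq_zero_iff_right hε.ne', sub_eq_zero] at h_eq
  exact h_eq.symm

lemma eq_zero_of_forall_nonpos_of_isBounded {w : E} (hQ : Bornology.IsBounded (polyhedron l c))
    (hne : (polyhedron l c).Nonempty) (hw : ∀ i, l i w ≤ 0) : w = 0 := by
  by_contra hw0
  obtain ⟨q, hq⟩ := hne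
  obtain ⟨R, hR⟩ := hQ.exists_norm_le
  have h_ray (n : ℕ) : q + (n : ℝ) • w ∈ polyhedron l c := fun i => by
    have := mul_nonpos_of_nonneg_of_nonpos n.cast_nonneg (hw i)
    simpa using add_le_add (hq i) this
  obtain ⟨n, hn⟩ := exists_nat_gt ((R + ‖q‖) / ‖w‖)
  have h_upper : ‖(n : ℝ) • w‖ ≤ R + ‖q‖ := by
    simpa using norm_sub_le_of_le (hR _ (h_ray n)) le_rfl (a₂ := q)
  rw [norm_smul, Real.norm_natCast] at h_upper
  exact absurd h_upper (not_le.2 ((div_lt_iff₀ (norm_pos_iff.2 hw0)).1 hn))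

/-- Pairs `(v, t)` encoding two points `t • v` and `v` of a polyhedron on a common ray from the
origin, the former weakly closer to it, whose active sets lie in `𝒜` and `ℬ` respectively. -/
def rayPairs (l : ι → E →L[ℝ] ℝ) (c : ι → ℝ) (𝒜 ℬ : Set (Set ι)) : Set (E × ℝ) :=
  polyhedron l c ×ˢ Icc 0 1 ∩
    {p | p.2 • p.1 ∈ polyhedron l c ∧ activeSet l c (p.2 • p.1) ∈ 𝒜 ∧ activeSet l c p.1 ∈ ℬ}

variable {𝒜 ℬ : Set (Set ι)}

lemma isCompact_rayPairs [Finite ι] (hQ : IsCompact (polyhedron l c)) (h𝒜 : IsUpperSet 𝒜)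
    (hℬ : IsUpperSet ℬ) : IsCompact (rayPairs l c 𝒜 ℬ) := by
  have h_smul : Continuous fun p : E × ℝ => p.2 • p.1 := by fun_prop
  exact (hQ.prod isCompact_Icc).inter_right ((isClosed_polyhedron.preimage h_smul).inter
    (((isClosed_setOf_activeSet_mem h𝒜).preimage h_smul).inter
      ((isClosed_setOf_activeSet_mem hℬ).preimage continuous_fst)))

/-- Pushing `v` and `t • v` away from a common point `w` of their faces, and then pulling the latter
back towards `w` until both lie on a common ray, shrinks the ratio `t`. -/
lemma exists_mem_rayPairs_snd_lt [Finite ι] (h𝒜 : IsUpperSet 𝒜) (hℬ : IsUpperSet ℬ) {v w : E}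
    {t : ℝ} (hp : (v, t) ∈ rayPairs l c 𝒜 ℬ) (ht : t ∈ Ioo 0 1) (hw : w ∈ polyhedron l c)
    (huw : activeSet l c (t • v) ⊆ activeSet l c w) (hvw : activeSet l c v ⊆ activeSet l c w) :
    ∃ p ∈ rayPairs l c 𝒜 ℬ, p.2 < t := by
  obtain ⟨⟨hv, -⟩, hu, hu𝒜, hvℬ⟩ := hp
  obtain ⟨ε, ⟨hu', hv'⟩, hε : 0 < ε⟩ := ((eventually_add_smul_sub_mem_polyhedron hu huw).and
    (eventually_add_smul_sub_mem_polyhedron hv hvw) |>.and self_mem_nhdsWithin).exists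
  have h_active {y : E} (hyw : activeSet l c y ⊆ activeSet l c w) :
      activeSet l c y ⊆ activeSet l c (y + ε • (y - w)) := by
    have h_comb : y + ε • (y - w) = (1 + ε) • y + (-ε) • w := by module
    rw [h_comb]
    exact fun i hi => inter_subset_activeSet_add_smul (by ring) ⟨hi, hyw hi⟩
  set δ := ε * (1 - t) with hδ_def
  have hδ : 0 < δ := mul_pos hε (sub_pos.2 ht.2)
  have h_weights : (1 + δ)⁻¹ + (1 + δ)⁻¹ * δ = 1 := by field_simp
  have h_pull : (t / (1 + δ)) • (v + ε • (v - w))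
      = (1 + δ)⁻¹ • (t • v + ε • (t • v - w)) + ((1 + δ)⁻¹ * δ) • w := by
    rw [hδ_def, div_eq_inv_mul]
    module
  have h_ratio : t / (1 + δ) < t := div_lt_self ht.1 (by linarith)
  have h_ratio_nonneg : 0 ≤ t / (1 + δ) := div_nonneg ht.1.le (by linarith)
  refine ⟨(v + ε • (v - w), t / (1 + δ)),
    ⟨⟨hv', h_ratio_nonneg, (h_ratio.trans ht.2).le⟩, ?_, ?_, hℬ (h_active hvw) hvℬ⟩, h_ratio⟩
  · rw [h_pull]
    exact convex_polyhedron hu' hw (by positivity) (by positivity) h_weights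
  · rw [h_pull]
    exact h𝒜 (fun i hi => inter_subset_activeSet_add_smul h_weights ⟨h_active huw hi, huw hi⟩) hu𝒜

lemma exists_mem_rayPairs_disjoint_faces [Finite ι] (hQ : IsCompact (polyhedron l c))
    (h0 : (0 : E) ∉ polyhedron l c) (h𝒜 : IsUpperSet 𝒜) (hℬ : IsUpperSet ℬ)
    (hne : ∃ p ∈ rayPairs l c 𝒜 ℬ, p.2 < 1) :
    ∃ v t, (v, t) ∈ rayPairs l c 𝒜 ℬ ∧ t ∈ Ioo 0 1 ∧
      ∀ w ∈ polyhedron l c, activeSet l c (t • v) ⊆ activeSet l c w →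
        ¬ activeSet l c v ⊆ activeSet l c w := by
  obtain ⟨p₀, hp₀, hp₀_lt⟩ := hne
  obtain ⟨⟨v, t⟩, hp, h_min⟩ := (isCompact_rayPairs hQ h𝒜 hℬ).exists_isMinOn ⟨p₀, hp₀⟩
    continuous_snd.continuousOn
  have ht_ne : t ≠ 0 := by
    rintro rfl
    exact h0 (by simpa using hp.2.1)
  have ht : t ∈ Ioo 0 1 := ⟨hp.1.2.1.lt_of_ne' ht_ne, (h_min hp₀).trans_lt hp₀_lt⟩
  refine ⟨v, t, hp, ht, fun w hw huw hvw => ?_⟩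
  obtain ⟨p, hp', hpt⟩ := exists_mem_rayPairs_snd_lt h𝒜 hℬ hp ht hw huw hvw
  exact absurd (h_min hp') (not_le.2 hpt)

end LinearInequalities

section ConvexBody

open Set Topology

lemma lt_of_mem_interior {K : Set E} {l : E →L[ℝ] ℝ} {c : ℝ} (hl : l ≠ 0)
    (hle : ∀ y ∈ K, l y ≤ c) {y : E} (hy : y ∈ interior K) : l y < c := by
  have h_image : l '' interior K ⊆ interior (Iic c) :=
    interior_maximal (image_subset_iff.2 fun z hz => hle z (interior_subset hz))
      (l.isOpenMap_of_ne_zero hl _ isOpen_interior)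
  rw [interior_Iic] at h_image
  exact h_image (mem_image_of_mem l hy)

lemma mem_interior_polyhedron {ι : Type*} [Finite ι] {l : ι → E →L[ℝ] ℝ} {c : ι → ℝ} {w : E}
    (hw : ∀ i, l i w < c i) : w ∈ interior (polyhedron l c) := by
  refine interior_maximal (s := polyhedron l c) (t := ⋂ i, {y | l i y < c i})
    (fun y hy i => (mem_iInter.1 hy i).le) ?_ (mem_iInter.2 hw)
  exact isOpen_iInter_of_finite fun i => isOpen_lt (l i).continuous continuous_const

lemma mem_frontier_polyhedron_iff {ι : Type*} [Finite ι] {l : ι → E →L[ℝ] ℝ} {c : ι → ℝ}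
    (hc : ∀ i, 0 < c i) {w : E} :
    w ∈ frontier (polyhedron l c) ↔ w ∈ polyhedron l c ∧ (activeSet l c w).Nonempty := by
  rw [isClosed_polyhedron.frontier_eq]
  refine and_congr_right fun hw => ⟨fun h_int => ?_, ?_⟩
  · by_contra h_active
    rw [not_nonempty_iff_eq_empty, eq_empty_iff_forall_notMem] at h_active
    exact h_int (mem_interior_polyhedron fun i => (hw i).lt_of_ne (h_active i))
  · rintro ⟨i, hi : l i w = c i⟩ h_int
    have hl : l i ≠ 0 := fun hl => (hc i).ne (by simpa [hl] using hi)
    exact (lt_of_mem_interior (K := polyhedron l c) hl (fun y hy => hy i) h_int).ne hi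

lemma isPreconnected_frontier_of_convex [FiniteDimensional ℝ E] (hE : 2 ≤ Module.finrank ℝ E)
    {K : Set E} (hK : Convex ℝ K) (hne : (interior K).Nonempty) (hb : Bornology.IsBounded K) :
    IsPreconnected (frontier K) := by
  obtain ⟨h, -, -, h_frontier⟩ :=
    exists_homeomorph_image_interior_closure_frontier_eq_unitBall hK hne hb
  rw [← h.isPreconnected_image, h_frontier]
  refine isPreconnected_sphere ?_ _ _
  rw [← Module.finrank_eq_rank]
  exact_mod_cast hE

/-- The connecting set is the radial projection of the segment `[p, q]` to the frontier. -/
lemma exists_isPreconnected_subset_frontier_of_mem_nhds_zero {K : Set E} (hK : Convex ℝ K)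
    (hK_nhds : K ∈ 𝓝 0) (hb : Bornology.IsBounded K) {ψ : E →L[ℝ] ℝ} {p q : E} {r : ℝ}
    (hr : r < 0) (hp : p ∈ frontier K) (hpr : ψ p ≤ r) (hq : q ∈ frontier K) (hqr : ψ q ≤ r) :
    ∃ S ⊆ frontier K, IsPreconnected S ∧ p ∈ S ∧ q ∈ S ∧ ∀ z ∈ S, ψ z ≤ r := by
  have h_le (y : E) (hy : y ∈ segment ℝ p q) : ψ y ≤ r :=
    (convex_halfSpace_le ψ.isLinear r).segment_subset hpr hqr hy
  have h_gauge_pos (y : E) (hy : y ∈ segment ℝ p q) : 0 < gauge K y := by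
    refine (gauge_pos (absorbent_nhds_zero hK_nhds)
      (NormedSpace.isVonNBounded_of_isBounded ℝ hb)).2 ?_
    rintro rfl
    exact (h_le 0 hy).not_gt (by simpa using hr)
  have h_gauge_le (y : E) (hy : y ∈ segment ℝ p q) : gauge K y ≤ 1 :=
    (gauge_le_one_iff_mem_closure hK hK_nhds).2 (hK.closure.segment_subset hp.1 hq.1 hy)
  set proj : E → E := fun y => (gauge K y)⁻¹ • y
  have h_proj {y : E} (hy : y ∈ frontier K) : proj y = y := by
    simp [proj, (gauge_eq_one_iff_mem_frontier hK hK_nhds).2 hy]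
  refine ⟨proj '' segment ℝ p q, ?_, ?_, ⟨p, left_mem_segment _ _ _, h_proj hp⟩,
    ⟨q, right_mem_segment _ _ _, h_proj hq⟩, ?_⟩
  · rintro _ ⟨y, hy, rfl⟩
    have h_pos := h_gauge_pos y hy
    rw [← gauge_eq_one_iff_mem_frontier hK hK_nhds, gauge_smul_of_nonneg (by positivity),
      smul_eq_mul, inv_mul_cancel₀ h_pos.ne']
  · exact (convex_segment p q).isPreconnected.image _
      (((continuous_gauge hK hK_nhds).continuousOn.inv₀ fun y hy => (h_gauge_pos y hy).ne').smul
        continuousOn_id)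
  · rintro _ ⟨y, hy, rfl⟩
    have h_inv : 1 ≤ (gauge K y)⁻¹ := (one_le_inv₀ (h_gauge_pos y hy)).2 (h_gauge_le y hy)
    calc ψ (proj y) = (gauge K y)⁻¹ * ψ y := by simp [proj]
      _ ≤ ψ y := by nlinarith [h_le y hy]
      _ ≤ r := h_le y hy

lemma exists_isPreconnected_subset_frontier {K : Set E} (hK : Convex ℝ K)
    (hb : Bornology.IsBounded K) {ψ : E →L[ℝ] ℝ} {o p q : E} {r : ℝ} (ho : o ∈ interior K)
    (hor : r < ψ o) (hp : p ∈ frontier K) (hpr : ψ p ≤ r) (hq : q ∈ frontier K) (hqr : ψ q ≤ r) :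
    ∃ S ⊆ frontier K, IsPreconnected S ∧ p ∈ S ∧ q ∈ S ∧ ∀ z ∈ S, ψ z ≤ r := by
  let τ := IsometryEquiv.addLeft o
  have hτ_nhds : τ ⁻¹' K ∈ 𝓝 0 :=
    τ.continuous.continuousAt.preimage_mem_nhds (by simpa [τ] using mem_interior_iff_mem_nhds.1 ho)
  have h_frontier : frontier (τ ⁻¹' K) = τ ⁻¹' frontier K :=
    (τ.toHomeomorph.preimage_frontier K).symm
  obtain ⟨S, hS, hS_conn, hpS, hqS, hSψ⟩ :=
    exists_isPreconnected_subset_frontier_of_mem_nhds_zero (K := τ ⁻¹' K) (p := -o + p)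
      (q := -o + q) (r := r - ψ o) (hK.translate_preimage_right o) hτ_nhds
      (τ.isometry.antilipschitz.isBounded_preimage hb) (by linarith)
      (by simpa [h_frontier, τ]) (by rw [map_add, map_neg]; linarith)
      (by simpa [h_frontier, τ]) (by rw [map_add, map_neg]; linarith)
  refine ⟨τ '' S, ?_, hS_conn.image τ τ.continuous.continuousOn, ⟨_, hpS, by simp [τ]⟩,
    ⟨_, hqS, by simp [τ]⟩, ?_⟩
  · rw [image_subset_iff, ← h_frontier]
    exact hS
  · rintro _ ⟨z, hz, rfl⟩
    have := hSψ z hz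
    simp only [τ, IsometryEquiv.addLeft_apply, map_add]
    linarith

lemma isPreconnected_frontier_inter_lt [FiniteDimensional ℝ E] (hE : 2 ≤ Module.finrank ℝ E)
    {K : Set E} (hK : Convex ℝ K) (hne : (interior K).Nonempty) (hb : Bornology.IsBounded K)
    (ψ : E →L[ℝ] ℝ) (c : ℝ) : IsPreconnected (frontier K ∩ {y | ψ y < c}) := by
  refine isPreconnected_of_forall_pair ?_
  rintro p ⟨hp, hpc : ψ p < c⟩ q ⟨hq, hqc : ψ q < c⟩
  have h_max : max (ψ p) (ψ q) < c := max_lt hpc hqc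
  by_cases h_top : ∃ o ∈ interior K, max (ψ p) (ψ q) < ψ o
  · obtain ⟨o, ho, hoψ⟩ := h_top
    obtain ⟨S, hS, hS_conn, hpS, hqS, hSψ⟩ := exists_isPreconnected_subset_frontier hK hb ho hoψ
      hp (le_max_left _ _) hq (le_max_right _ _)
    exact ⟨S, fun z hz => ⟨hS hz, (hSψ z hz).trans_lt h_max⟩, hpS, hqS, hS_conn⟩
  · push Not at h_top
    have h_closure : closure K ⊆ {y | ψ y ≤ max (ψ p) (ψ q)} := by
      rw [← hK.closure_interior_eq_closure_of_nonempty_interior hne]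
      exact closure_minimal h_top (isClosed_le ψ.continuous continuous_const)
    exact ⟨frontier K, fun z hz => ⟨hz, (h_closure hz.1).trans_lt h_max⟩, hp, hq,
      isPreconnected_frontier_of_convex hE hK hne hb⟩

lemma exists_mem_frontier_inter_frontier [FiniteDimensional ℝ E] (hE : 2 ≤ Module.finrank ℝ E)
    {G H : Set E} (hG : Convex ℝ G) (hG_closed : IsClosed G) (hH : Convex ℝ H)
    (hH_closed : IsClosed H) {ψ : E →L[ℝ] ℝ} {c : ℝ}
    (hb : Bornology.IsBounded (G ∩ H ∩ {y | ψ y ≤ c})) {o p q : E}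
    (ho : o ∈ interior G ∩ interior H) (hoc : ψ o < c) (hp : p ∈ frontier G ∩ H) (hpc : ψ p < c)
    (hq : q ∈ G ∩ frontier H) (hqc : ψ q < c) :
    ∃ z ∈ frontier G ∩ frontier H, ψ z < c := by
  set K := G ∩ H ∩ {y | ψ y ≤ c}
  have hK_convex : Convex ℝ K := (hG.inter hH).inter (convex_halfSpace_le ψ.isLinear c)
  have hK_closed : IsClosed K :=
    (hG_closed.inter hH_closed).inter (isClosed_le ψ.continuous continuous_const)
  have h_half (z : E) (hz : ψ z < c) : z ∈ interior {y | ψ y ≤ c} :=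
    interior_maximal (fun y => le_of_lt) (isOpen_lt ψ.continuous continuous_const) hz
  have hne : (interior K).Nonempty := by
    rw [interior_inter, interior_inter]
    exact ⟨o, ho, h_half o hoc⟩
  have h_frontier (z : E) (hz : ψ z < c) :
      z ∈ frontier K ↔ z ∈ G ∩ H ∧ (z ∈ frontier G ∨ z ∈ frontier H) := by
    rw [hK_closed.frontier_eq, hG_closed.frontier_eq, hH_closed.frontier_eq]
    simp only [K, interior_inter, mem_inter_iff, Set.mem_sdiff, h_half z hz]
    have := interior_subset (h_half z hz)
    tauto
  obtain ⟨z, ⟨-, hzc⟩, hzG, hzH⟩ := isPreconnected_closed_iff.1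
    (isPreconnected_frontier_inter_lt hE hK_convex hne hb ψ c) (frontier G) (frontier H)
    isClosed_frontier isClosed_frontier (fun z hz => ((h_frontier z hz.2).1 hz.1).2)
    ⟨p, ⟨(h_frontier p hpc).2 ⟨⟨hG_closed.frontier_subset hp.1, hp.2⟩, .inl hp.1⟩, hpc⟩, hp.1⟩
    ⟨q, ⟨(h_frontier q hqc).2 ⟨⟨hq.1, hH_closed.frontier_subset hq.2⟩, .inr hq.2⟩, hqc⟩, hq.2⟩
  exact ⟨z, ⟨hzG, hzH⟩, hzc⟩

end ConvexBody

section Crease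

open Set

variable {ι κ : Type*} {f : ι → E →L[ℝ] ℝ} {g : κ → E →L[ℝ] ℝ}

/-- The functional `f i` attains the upper envelope of the family `f` at `w`. -/
def IsDominant (f : ι → E →L[ℝ] ℝ) (w : E) (i : ι) : Prop :=
  ∀ k, f k w ≤ f i w

/-- The points at which the upper envelope of `f` is attained by at least two members. -/
def crease (f : ι → E →L[ℝ] ℝ) : Set E :=
  {w | ∃ i k, i ≠ k ∧ IsDominant f w i ∧ IsDominant f w k}

lemma IsDominant.mem_crease {w : E} {i k : ι} (hi : IsDominant f w i) (hk : k ≠ i)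
    (h_eq : f k w = f i w) : w ∈ crease f :=
  ⟨k, i, hk, fun m => (hi m).trans_eq h_eq.symm, hi⟩

lemma IsDominant.lt_of_notMem_crease {w : E} {i k : ι} (hi : IsDominant f w i)
    (hw : w ∉ crease f) (hk : k ≠ i) : f k w < f i w :=
  (hi k).lt_of_ne fun h_eq => hw (hi.mem_crease hk h_eq)

lemma IsDominant.exists_ne_eq_of_mem_crease {w : E} {i : ι} (hi : IsDominant f w i)
    (hw : w ∈ crease f) : ∃ k ≠ i, f k w = f i w := by
  obtain ⟨m, k, hmk, hm, hk⟩ := hw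
  rcases eq_or_ne m i with rfl | hmi
  · exact ⟨k, hmk.symm, (hi k).antisymm (hk m)⟩
  · exact ⟨m, hmi, (hi m).antisymm (hm i)⟩

lemma isDominant_smul_iff {w : E} {i : ι} {r : ℝ} (hr : 0 < r) :
    IsDominant f (r • w) i ↔ IsDominant f w i := by
  simp [IsDominant, hr]

lemma smul_mem_crease_iff {w : E} {r : ℝ} (hr : 0 < r) : r • w ∈ crease f ↔ w ∈ crease f := by
  simp [crease, isDominant_smul_iff hr]

lemma exists_isDominant [Finite ι] [Nonempty ι] (f : ι → E →L[ℝ] ℝ) (w : E) :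
    ∃ i, IsDominant f w i :=
  Finite.exists_max fun i => f i w

lemma isClosed_setOf_isDominant (f : ι → E →L[ℝ] ℝ) (i : ι) :
    IsClosed {w | IsDominant f w i} := by
  simp only [IsDominant, ofPred_forall]
  exact isClosed_iInter fun k => isClosed_le (f k).continuous (f i).continuous

lemma isClosed_crease [Finite ι] (f : ι → E →L[ℝ] ℝ) : IsClosed (crease f) := by
  simp only [crease, ofPred_exists, ofPred_and]
  exact isClosed_iUnion_of_finite fun i => isClosed_iUnion_of_finite fun k =>
    isClosed_const.inter ((isClosed_setOf_isDominant f i).inter (isClosed_setOf_isDominant f k))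

lemma exists_isDominant_of_disjoint_crease [Finite ι] [Nonempty ι] {S : Set E}
    (hS : IsPreconnected S) (h_disj : Disjoint S (crease f)) :
    ∃ i, ∀ w ∈ S, IsDominant f w i := by
  rcases S.eq_empty_or_nonempty with rfl | ⟨w₀, hw₀⟩
  · simp
  obtain ⟨i, hi⟩ := exists_isDominant f w₀
  refine ⟨i, fun w hw => by_contra fun hwi => ?_⟩
  have h_cover (y : E) : IsDominant f y i ∨ y ∈ ⋃ k : {k // k ≠ i}, {z | IsDominant f z k} := by
    obtain ⟨k, hk⟩ := exists_isDominant f y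
    rcases eq_or_ne k i with rfl | hki
    exacts [.inl hk, .inr (mem_iUnion.2 ⟨⟨k, hki⟩, hk⟩)]
  obtain ⟨z, hzS, hzi, hz⟩ := isPreconnected_closed_iff.1 hS _ _ (isClosed_setOf_isDominant f i)
    (isClosed_iUnion_of_finite fun k : {k // k ≠ i} => isClosed_setOf_isDominant f k)
    (fun y _ => h_cover y) ⟨w₀, hw₀, hi⟩ ⟨w, hw, (h_cover w).resolve_left hwi⟩
  obtain ⟨k, hk⟩ := mem_iUnion.1 hz
  exact disjoint_left.1 h_disj hzS ⟨k, i, k.2, hk, hzi⟩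

lemma exists_mem_crease_of_isPreconnected [Finite ι] {S : Set E} (hS : IsPreconnected S)
    {p q : E} {i k : ι} (hik : i ≠ k) (hp : p ∈ S) (hpi : IsDominant f p i) (hq : q ∈ S)
    (hqk : IsDominant f q k) : ∃ w ∈ S, w ∈ crease f := by
  by_contra! h_none
  have : Nonempty ι := ⟨i⟩
  obtain ⟨m, hm⟩ := exists_isDominant_of_disjoint_crease hS (disjoint_left.2 h_none)
  have h_eq {y : E} {n : ι} (hy : y ∈ S) (hn : IsDominant f y n) : n = m :=
    by_contra fun hnm => h_none y hy ⟨n, m, hnm, hn, hm y hy⟩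
  exact hik ((h_eq hp hpi).trans (h_eq hq hqk).symm)

lemma exists_isDominant_on_segment [Finite ι] [Nonempty ι] {a b : E}
    (h_disj : Disjoint (openSegment ℝ a b) (crease f)) :
    ∃ i, ∀ w ∈ segment ℝ a b, IsDominant f w i := by
  obtain ⟨i, hi⟩ :=
    exists_isDominant_of_disjoint_crease (convex_openSegment a b).isPreconnected h_disj
  exact ⟨i, fun w hw => closure_minimal hi (isClosed_setOf_isDominant f i)
    (segment_subset_closure_openSegment hw)⟩

/-- The endpoints are a closest pair of points of `A ∩ S` and `B ∩ S`. -/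
lemma exists_openSegment_disjoint_of_isClosed {S A B : Set E} (hS : IsCompact S)
    (hS_convex : Convex ℝ S) (hA : IsClosed A) (hB : IsClosed B) (hSA : (S ∩ A).Nonempty)
    (hSB : (S ∩ B).Nonempty) (hAB : Disjoint (S ∩ A) B) :
    ∃ a ∈ S ∩ A, ∃ b ∈ S ∩ B, Disjoint (openSegment ℝ a b) A ∧ Disjoint (openSegment ℝ a b) B := by
  obtain ⟨⟨a, b⟩, ⟨ha, hb⟩, h_min⟩ := ((hS.inter_right hA).prod (hS.inter_right hB)).exists_isMinOn
    (hSA.prod hSB) continuous_dist.continuousOn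
  have hab : a ≠ b := disjoint_iff_forall_ne.1 hAB ha hb.2
  have h_sub : openSegment ℝ a b ⊆ S := hS_convex.openSegment_subset ha.1 hb.1
  refine ⟨a, ha, b, hb, disjoint_left.2 fun z hz hzA => ?_, disjoint_left.2 fun z hz hzB => ?_⟩
  · have h_add := dist_add_dist_of_mem_segment (openSegment_subset_segment ℝ a b hz)
    have h_le : dist a b ≤ dist z b := h_min (mk_mem_prod ⟨h_sub hz, hzA⟩ hb)
    obtain rfl : a = z := dist_le_zero.1 (by linarith)
    exact hab (left_mem_openSegment_iff.1 hz)
  · have h_add := dist_add_dist_of_mem_segment (openSegment_subset_segment ℝ a b hz)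
    have h_le : dist a b ≤ dist a z := h_min (mk_mem_prod ha ⟨h_sub hz, hzB⟩)
    obtain rfl : z = b := dist_le_zero.1 (by linarith)
    exact hab (right_mem_openSegment_iff.1 hz)

/-- The polyhedron `{f i ≤ 1} ∩ {g j ≤ -1}`: every system of linear inequalities with nonzero
right-hand sides takes this form after rescaling. -/
abbrev normalizedPolyhedron (f : ι → E →L[ℝ] ℝ) (g : κ → E →L[ℝ] ℝ) : Set E :=
  polyhedron (Sum.elim f g) (Sum.elim 1 (-1))

/-- The rays from the origin that meet `normalizedPolyhedron f g` in a nondegenerate segment; when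
the polyhedron is bounded, the ray through `w` leaves it where the upper envelope of `f` equals `1`
and enters it where the upper envelope of `g` equals `-1`. -/
def crossingCone (f : ι → E →L[ℝ] ℝ) (g : κ → E →L[ℝ] ℝ) : Set E :=
  {w | ∀ i j, f i w + g j w < 0}

lemma mem_normalizedPolyhedron {w : E} :
    w ∈ normalizedPolyhedron f g ↔ (∀ i, f i w ≤ 1) ∧ ∀ j, g j w ≤ -1 := by
  simp [normalizedPolyhedron, polyhedron]

lemma convex_crossingCone : Convex ℝ (crossingCone f g) := by
  simp only [crossingCone, ofPred_forall]
  exact convex_iInter fun i => convex_iInter fun j =>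
    convex_halfSpace_lt (f i + g j).isLinear 0

lemma IsDominant.pos_of_mem_crossingCone [Nonempty κ]
    (hQ : Bornology.IsBounded (normalizedPolyhedron f g))
    (hQ_ne : (normalizedPolyhedron f g).Nonempty) {w : E} (hw : w ∈ crossingCone f g) {i : ι}
    (hi : IsDominant f w i) : 0 < f i w := by
  by_contra! h_nonpos
  obtain ⟨q, hq⟩ := id hQ_ne
  obtain ⟨hqf, hqg⟩ := mem_normalizedPolyhedron.1 hq
  have hf (k : ι) : f k (w - f i w • q) ≤ 0 := by
    simp only [map_sub, map_smul, smul_eq_mul]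
    nlinarith [hi k, hqf k]
  have hg (j : κ) : g j (w - f i w • q) < 0 := by
    simp only [map_sub, map_smul, smul_eq_mul]
    nlinarith [hw i j, hqg j]
  have h_zero := eq_zero_of_forall_nonpos_of_isBounded hQ hQ_ne
    (Sum.forall.2 ⟨hf, fun j => (hg j).le⟩)
  obtain ⟨j⟩ := ‹Nonempty κ›
  exact (hg j).ne (by rw [h_zero, map_zero])

/-- The part of the affine subspace `m + V` on which `f i` is dominant, as a subset of `V`. -/
def dominanceRegion (f : ι → E →L[ℝ] ℝ) (i : ι) (m : E) (V : Submodule ℝ E) : Set V :=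
  {q | IsDominant f (m + q) i}

section DominanceRegion

variable {i : ι} {m : E} {V : Submodule ℝ E}

lemma sub_comp_apply_le_iff {k : ι} {q : V} :
    (f k - f i).comp V.subtypeL q ≤ f i m - f k m ↔ f k (m + q) ≤ f i (m + q) := by
  simp only [ContinuousLinearMap.comp_apply, Submodule.subtypeL_apply, map_add,
    sub_apply]
  constructor <;> intro h <;> linarith

lemma dominanceRegion_eq_polyhedron :
    dominanceRegion f i m V = polyhedron (fun k : {k // k ≠ i} => (f k - f i).comp V.subtypeL)
      (fun k => f i m - f k m) := by
  ext q
  simp only [dominanceRegion, IsDominant, polyhedron, mem_ofPred_eq, sub_comp_apply_le_iff]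
  refine ⟨fun hq k => hq k, fun hq k => ?_⟩
  rcases eq_or_ne k i with rfl | hk
  exacts [le_rfl, hq ⟨k, hk⟩]

lemma convex_dominanceRegion : Convex ℝ (dominanceRegion f i m V) := by
  rw [dominanceRegion_eq_polyhedron]
  exact convex_polyhedron

lemma isClosed_dominanceRegion : IsClosed (dominanceRegion f i m V) := by
  rw [dominanceRegion_eq_polyhedron]
  exact isClosed_polyhedron

lemma zero_mem_interior_dominanceRegion [Finite ι] (hi : IsDominant f m i) (hm : m ∉ crease f) :
    0 ∈ interior (dominanceRegion f i m V) := by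
  rw [dominanceRegion_eq_polyhedron]
  exact mem_interior_polyhedron fun k => by simpa using hi.lt_of_notMem_crease hm k.2

lemma mem_frontier_dominanceRegion_iff [Finite ι] (hi : IsDominant f m i) (hm : m ∉ crease f)
    {q : V} : q ∈ frontier (dominanceRegion f i m V) ↔
      IsDominant f (m + q) i ∧ m + (q : E) ∈ crease f := by
  have h_pos (k : {k // k ≠ i}) : 0 < f i m - f k m := sub_pos.2 (hi.lt_of_notMem_crease hm k.2)
  have h_tie (k : ι) : (f k - f i).comp V.subtypeL q = f i m - f k m ↔
      f k (m + q) = f i (m + q) := by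
    simp only [ContinuousLinearMap.comp_apply, Submodule.subtypeL_apply, map_add,
      sub_apply]
    constructor <;> intro h <;> linarith
  rw [dominanceRegion_eq_polyhedron, mem_frontier_polyhedron_iff h_pos,
    ← dominanceRegion_eq_polyhedron]
  refine and_congr_right fun hq => ⟨?_, fun h_crease => ?_⟩
  · rintro ⟨k, hk⟩
    exact IsDominant.mem_crease hq k.2 ((h_tie k).1 hk)
  · obtain ⟨k, hki, hk⟩ := IsDominant.exists_ne_eq_of_mem_crease hq h_crease
    exact ⟨⟨k, hki⟩, (h_tie k).2 hk⟩

end DominanceRegion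

/-- The points where the rays of `crossingCone f g` with dominant indices `i` and `j` leave
`normalizedPolyhedron f g`. -/
def exitCell (f : ι → E →L[ℝ] ℝ) (g : κ → E →L[ℝ] ℝ) (i : ι) (j : κ) : Set E :=
  {w | IsDominant f w i ∧ IsDominant g w j ∧ f i w = 1 ∧ g j w < -1}

lemma exitCell_subset_crossingCone {i : ι} {j : κ} : exitCell f g i j ⊆ crossingCone f g := by
  rintro w ⟨hf, hg, hi, hj⟩ k n
  linarith [hf k, hg n]

lemma isBounded_slice {i : ι} {j : κ} {m : E}
    (hQ : Bornology.IsBounded (normalizedPolyhedron f g)) (hm : f i m = 1) :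
    Bornology.IsBounded {q : LinearMap.ker (f i : E →ₗ[ℝ] ℝ) |
      IsDominant f (m + q) i ∧ IsDominant g (m + q) j ∧ g j (m + q) ≤ -1} := by
  have h_isom : Isometry fun q : LinearMap.ker (f i : E →ₗ[ℝ] ℝ) => m + (q : E) :=
    (IsometryEquiv.addLeft m).isometry.comp isometry_subtype_coe
  refine (h_isom.antilipschitz.isBounded_preimage hQ).subset ?_
  rintro q ⟨hqf, hqg, hqj⟩
  have hqi : f i (m + q) = 1 := by simp [hm]
  exact mem_normalizedPolyhedron.2 ⟨fun k => (hqf k).trans_eq hqi, fun k => (hqg k).trans hqj⟩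

/-- In the hyperplane `f i = 1`, the two creases bound convex sets, so they meet because the
boundary of a convex body stays connected after removing a flat face. -/
lemma exists_mem_crease_inter_crease_of_exitCell [FiniteDimensional ℝ E]
    (hE : 3 ≤ Module.finrank ℝ E) [Finite ι] [Finite κ]
    (hQ : Bornology.IsBounded (normalizedPolyhedron f g)) {i : ι} {j : κ} {a b m : E}
    (hm : m ∈ exitCell f g i j) (hmf : m ∉ crease f) (hmg : m ∉ crease g)
    (ha : a ∈ exitCell f g i j) (haf : a ∈ crease f) (hb : b ∈ exitCell f g i j)
    (hbg : b ∈ crease g) : ∃ w ∈ crossingCone f g, w ∈ crease f ∩ crease g := by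
  obtain ⟨hm_f, hm_g, hm_i, hm_j⟩ := hm
  have hfi : f i ≠ 0 := fun h => by simp [h] at hm_i
  have hV : 2 ≤ Module.finrank ℝ (LinearMap.ker (f i : E →ₗ[ℝ] ℝ)) := by
    have := finrank_ker_add_one hfi
    lia
  let V := LinearMap.ker (f i : E →ₗ[ℝ] ℝ)
  let ψ : V →L[ℝ] ℝ := (g j).comp V.subtypeL
  have hψ_lt (q : V) : ψ q < -1 - g j m ↔ g j (m + q) < -1 := by
    simp [ψ, lt_sub_iff_add_lt']
  have h_bounded : Bornology.IsBounded (dominanceRegion f i m V ∩ dominanceRegion g j m V ∩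
      {q | ψ q ≤ -1 - g j m}) :=
    (isBounded_slice hQ hm_i).subset fun q hq =>
      ⟨hq.1.1, hq.1.2, by simpa [ψ, le_sub_iff_add_le'] using hq.2⟩
  have h_lift (y : E) (hy : y ∈ exitCell f g i j) : ∃ q : V, m + q = y :=
    ⟨⟨y - m, by simp [V, hy.2.2.1, hm_i]⟩, by simp⟩
  obtain ⟨⟨p, rfl⟩, ⟨q, rfl⟩⟩ := And.intro (h_lift a ha) (h_lift b hb)
  obtain ⟨z, ⟨hzf, hzg⟩, hzψ⟩ := exists_mem_frontier_inter_frontier hV convex_dominanceRegion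
    isClosed_dominanceRegion convex_dominanceRegion isClosed_dominanceRegion h_bounded
    ⟨zero_mem_interior_dominanceRegion hm_f hmf, zero_mem_interior_dominanceRegion hm_g hmg⟩
    ((hψ_lt 0).2 (by simpa using hm_j))
    ⟨(mem_frontier_dominanceRegion_iff hm_f hmf).2 ⟨ha.1, haf⟩, ha.2.1⟩
    ((hψ_lt p).2 ha.2.2.2) ⟨hb.1, (mem_frontier_dominanceRegion_iff hm_g hmg).2 ⟨hb.2.1, hbg⟩⟩
    ((hψ_lt q).2 hb.2.2.2)
  rw [mem_frontier_dominanceRegion_iff hm_f hmf] at hzf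
  rw [mem_frontier_dominanceRegion_iff hm_g hmg] at hzg
  exact ⟨m + z, exitCell_subset_crossingCone
    ⟨hzf.1, hzg.1, by simp [hm_i], (hψ_lt z).1 hzψ⟩, hzf.2, hzg.2⟩

lemma inv_smul_mem_exitCell {w : E} (hw : w ∈ crossingCone f g) {i : ι} {j : κ}
    (hi : IsDominant f w i) (hj : IsDominant g w j) (h_pos : 0 < f i w) :
    (f i w)⁻¹ • w ∈ exitCell f g i j := by
  have h_inv := inv_pos.2 h_pos
  refine ⟨(isDominant_smul_iff h_inv).2 hi, (isDominant_smul_iff h_inv).2 hj,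
    by simp [h_pos.ne'], ?_⟩
  rw [map_smul, smul_eq_mul, inv_mul_lt_iff₀ h_pos]
  linarith [hw i j]

lemma exists_mem_crease_inter_crease [FiniteDimensional ℝ E] (hE : 3 ≤ Module.finrank ℝ E)
    [Finite ι] [Finite κ] (hQ : Bornology.IsBounded (normalizedPolyhedron f g))
    (hQ_ne : (normalizedPolyhedron f g).Nonempty) (hf : ∃ w ∈ crossingCone f g, w ∈ crease f)
    (hg : ∃ w ∈ crossingCone f g, w ∈ crease g) :
    ∃ w ∈ crossingCone f g, w ∈ crease f ∩ crease g := by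
  obtain ⟨⟨a₀, ha₀, ha₀f⟩, ⟨b₀, hb₀, hb₀g⟩⟩ := And.intro hf hg
  have : Nonempty ι := ⟨ha₀f.choose⟩
  have : Nonempty κ := ⟨hb₀g.choose⟩
  by_contra! h_none
  have h_seg : segment ℝ a₀ b₀ ⊆ crossingCone f g := convex_crossingCone.segment_subset ha₀ hb₀
  have h_compact : IsCompact (segment ℝ a₀ b₀) := by
    rw [segment_eq_image_lineMap]
    exact isCompact_Icc.image (by fun_prop)
  obtain ⟨a, ⟨ha_seg, haf⟩, b, ⟨hb_seg, hbg⟩, h_disj_f, h_disj_g⟩ :=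
    exists_openSegment_disjoint_of_isClosed h_compact (convex_segment a₀ b₀) (isClosed_crease f)
      (isClosed_crease g) ⟨a₀, left_mem_segment _ _ _, ha₀f⟩ ⟨b₀, right_mem_segment _ _ _, hb₀g⟩
      (disjoint_left.2 fun w hwf hwg => h_none w (h_seg hwf.1) ⟨hwf.2, hwg⟩)
  obtain ⟨i, hi⟩ := exists_isDominant_on_segment h_disj_f
  obtain ⟨j, hj⟩ := exists_isDominant_on_segment h_disj_g
  have h_cone : segment ℝ a b ⊆ crossingCone f g :=
    convex_crossingCone.segment_subset (h_seg ha_seg) (h_seg hb_seg)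
  have h_pos (w : E) (hw : w ∈ segment ℝ a b) : 0 < f i w :=
    (hi w hw).pos_of_mem_crossingCone hQ hQ_ne (h_cone hw)
  have h_cell (w : E) (hw : w ∈ segment ℝ a b) : (f i w)⁻¹ • w ∈ exitCell f g i j :=
    inv_smul_mem_exitCell (h_cone hw) (hi w hw) (hj w hw) (h_pos w hw)
  have ha := left_mem_segment ℝ a b
  have hb := right_mem_segment ℝ a b
  have hm := midpoint_mem_segment (𝕜 := ℝ) a b
  have hm_open := midpoint_mem_openSegment (𝕜 := ℝ) a b
  obtain ⟨w, hw, hw_crease⟩ := exists_mem_crease_inter_crease_of_exitCell hE hQ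
    (h_cell _ hm)
    ((smul_mem_crease_iff (inv_pos.2 (h_pos _ hm))).not.2 (disjoint_left.1 h_disj_f hm_open))
    ((smul_mem_crease_iff (inv_pos.2 (h_pos _ hm))).not.2 (disjoint_left.1 h_disj_g hm_open))
    (h_cell a ha) ((smul_mem_crease_iff (inv_pos.2 (h_pos a ha))).2 haf)
    (h_cell b hb) ((smul_mem_crease_iff (inv_pos.2 (h_pos b hb))).2 hbg)
  exact h_none w hw hw_crease

lemma exists_ray_through_ridges [Nonempty κ]
    (hQ : Bornology.IsBounded (normalizedPolyhedron f g))
    (hQ_ne : (normalizedPolyhedron f g).Nonempty) {w : E} (hw : w ∈ crossingCone f g)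
    (hwf : w ∈ crease f) (hwg : w ∈ crease g) :
    ∃ v ∈ normalizedPolyhedron f g, ∃ t ∈ Ico (0 : ℝ) 1, t • v ∈ normalizedPolyhedron f g ∧
      {i | f i v = 1}.Nontrivial ∧ {j | g j (t • v) = -1}.Nontrivial := by
  obtain ⟨⟨i, i', hii', hi, hi'⟩, ⟨j, j', hjj', hj, hj'⟩⟩ := And.intro hwf hwg
  have hi_pos := hi.pos_of_mem_crossingCone hQ hQ_ne hw
  have hij : f i w < -g j w := by linarith [hw i j]
  have hj_pos : 0 < -g j w := hi_pos.trans hij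
  have h_smul : (f i w / -g j w) • (f i w)⁻¹ • w = (-g j w)⁻¹ • w := by
    rw [smul_smul, div_mul_eq_mul_div, mul_inv_cancel₀ hi_pos.ne', one_div]
  obtain ⟨hi_exit, hj_exit, h_exit, h_exit_lt⟩ := inv_smul_mem_exitCell hw hi hj hi_pos
  have hi'_exit := (isDominant_smul_iff (inv_pos.2 hi_pos)).2 hi'
  have hi_entry := (isDominant_smul_iff (inv_pos.2 hj_pos)).2 hi
  have hj_entry := (isDominant_smul_iff (inv_pos.2 hj_pos)).2 hj
  have hj'_entry := (isDominant_smul_iff (inv_pos.2 hj_pos)).2 hj'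
  have h_entry : g j ((-g j w)⁻¹ • w) = -1 := by
    rw [map_smul, smul_eq_mul, inv_mul_eq_iff_eq_mul₀ hj_pos.ne', mul_neg_one, neg_neg]
  have h_entry_le : f i ((-g j w)⁻¹ • w) ≤ 1 := by
    rw [map_smul, smul_eq_mul, inv_mul_le_iff₀ hj_pos, mul_one]
    exact hij.le
  refine ⟨(f i w)⁻¹ • w, mem_normalizedPolyhedron.2 ⟨fun k => (hi_exit k).trans_eq h_exit,
    fun k => (hj_exit k).trans h_exit_lt.le⟩, f i w / -g j w, ⟨by positivity,
    (div_lt_one hj_pos).2 hij⟩, ?_⟩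
  rw [h_smul]
  exact ⟨mem_normalizedPolyhedron.2 ⟨fun k => (hi_entry k).trans h_entry_le,
      fun k => (hj_entry k).trans_eq h_entry⟩,
    ⟨i, h_exit, i', ((hi_exit i').antisymm (hi'_exit i)).trans h_exit, hii'⟩,
    ⟨j, h_entry, j', ((hj_entry j').antisymm (hj'_entry j)).trans h_entry, hjj'⟩⟩

end Crease

section SignedSystem

open Set

variable {ι : Type*} {l : ι → E →L[ℝ] ℝ} {c : ι → ℝ}

/-- The inequalities with positive right-hand side, normalised to `f i ≤ 1`. -/
noncomputable def upperFamily (l : ι → E →L[ℝ] ℝ) (c : ι → ℝ) (i : {i // 0 < c i}) : E →L[ℝ] ℝ :=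
  (c i)⁻¹ • l i

/-- The inequalities with negative right-hand side, normalised to `g j ≤ -1`. -/
noncomputable def lowerFamily (l : ι → E →L[ℝ] ℝ) (c : ι → ℝ) (j : {j // c j < 0}) : E →L[ℝ] ℝ :=
  (-c j)⁻¹ • l j

/-- Each inequality of the system is tight at some point at which all others are strict. -/
def IsIrredundant (l : ι → E →L[ℝ] ℝ) (c : ι → ℝ) : Prop :=
  ∀ i, ∃ w, l i w = c i ∧ ∀ k ≠ i, l k w < c k

lemma upperFamily_apply_le_one_iff {i : {i // 0 < c i}} {w : E} :
    upperFamily l c i w ≤ 1 ↔ l i w ≤ c i := by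
  simp [upperFamily, inv_mul_le_iff₀ i.2]

lemma upperFamily_apply_lt_one_iff {i : {i // 0 < c i}} {w : E} :
    upperFamily l c i w < 1 ↔ l i w < c i := by
  simp [upperFamily, inv_mul_lt_iff₀ i.2]

lemma upperFamily_apply_eq_one_iff {i : {i // 0 < c i}} {w : E} :
    upperFamily l c i w = 1 ↔ l i w = c i := by
  simp [upperFamily, inv_mul_eq_iff_eq_mul₀ i.2.ne']

lemma lowerFamily_apply_le_neg_one_iff {j : {j // c j < 0}} {w : E} :
    lowerFamily l c j w ≤ -1 ↔ l j w ≤ c j := by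
  rw [lowerFamily, smul_apply, smul_eq_mul, inv_mul_le_iff₀ (neg_pos.2 j.2), neg_mul_neg, mul_one]

lemma lowerFamily_apply_lt_neg_one_iff {j : {j // c j < 0}} {w : E} :
    lowerFamily l c j w < -1 ↔ l j w < c j := by
  rw [lowerFamily, smul_apply, smul_eq_mul, inv_mul_lt_iff₀ (neg_pos.2 j.2), neg_mul_neg, mul_one]

lemma lowerFamily_apply_eq_neg_one_iff {j : {j // c j < 0}} {w : E} :
    lowerFamily l c j w = -1 ↔ l j w = c j := by
  rw [lowerFamily, smul_apply, smul_eq_mul, inv_mul_eq_iff_eq_mul₀ (neg_pos.2 j.2).ne',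
    neg_mul_neg, mul_one]

lemma normalizedPolyhedron_eq_polyhedron (hc : ∀ i, c i ≠ 0) :
    normalizedPolyhedron (upperFamily l c) (lowerFamily l c) = polyhedron l c := by
  ext w
  simp only [mem_normalizedPolyhedron, upperFamily_apply_le_one_iff,
    lowerFamily_apply_le_neg_one_iff, Subtype.forall]
  refine ⟨fun hw i => ?_, fun hw => ⟨fun i _ => hw i, fun j _ => hw j⟩⟩
  rcases (hc i).lt_or_gt with hi | hi
  exacts [hw.2 i hi, hw.1 i hi]

lemma IsIrredundant.exists_isDominant_upperFamily (h_irr : IsIrredundant l c) (i : {i // 0 < c i}) :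
    ∃ w ∈ crossingCone (upperFamily l c) (lowerFamily l c), IsDominant (upperFamily l c) w i := by
  obtain ⟨w, hwi, hw⟩ := h_irr i
  have hwi_one : upperFamily l c i w = 1 := upperFamily_apply_eq_one_iff.2 hwi
  have h_le (k) : upperFamily l c k w ≤ 1 := by
    rcases eq_or_ne k i with rfl | hk
    · exact hwi_one.le
    · exact (upperFamily_apply_lt_one_iff.2 (hw k (Subtype.coe_ne_coe.2 hk))).le
  have h_lt (j) : lowerFamily l c j w < -1 :=
    lowerFamily_apply_lt_neg_one_iff.2 (hw j fun h => lt_asymm i.2 (h ▸ j.2))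
  exact ⟨w, fun k j => by linarith [h_le k, h_lt j], fun k => (h_le k).trans_eq hwi_one.symm⟩

lemma IsIrredundant.exists_isDominant_lowerFamily (h_irr : IsIrredundant l c) (j : {j // c j < 0}) :
    ∃ w ∈ crossingCone (upperFamily l c) (lowerFamily l c), IsDominant (lowerFamily l c) w j := by
  obtain ⟨w, hwj, hw⟩ := h_irr j
  have hwj_one : lowerFamily l c j w = -1 := lowerFamily_apply_eq_neg_one_iff.2 hwj
  have h_le (k) : lowerFamily l c k w ≤ -1 := by
    rcases eq_or_ne k j with rfl | hk
    · exact hwj_one.le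
    · exact (lowerFamily_apply_lt_neg_one_iff.2 (hw k (Subtype.coe_ne_coe.2 hk))).le
  have h_lt (i) : upperFamily l c i w < 1 :=
    upperFamily_apply_lt_one_iff.2 (hw i fun h => lt_asymm j.2 (h ▸ i.2))
  exact ⟨w, fun i k => by linarith [h_le k, h_lt i], fun k => (h_le k).trans_eq hwj_one.symm⟩

lemma IsIrredundant.exists_mem_crease_upperFamily [Finite ι] (h_irr : IsIrredundant l c)
    (h_pos : {i | 0 < c i}.Nontrivial) :
    ∃ w ∈ crossingCone (upperFamily l c) (lowerFamily l c), w ∈ crease (upperFamily l c) := by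
  obtain ⟨i, hi, k, hk, hik⟩ := h_pos
  obtain ⟨p, hp, hpi⟩ := h_irr.exists_isDominant_upperFamily ⟨i, hi⟩
  obtain ⟨q, hq, hqk⟩ := h_irr.exists_isDominant_upperFamily ⟨k, hk⟩
  exact exists_mem_crease_of_isPreconnected convex_crossingCone.isPreconnected
    (Subtype.coe_ne_coe.1 hik) hp hpi hq hqk

lemma IsIrredundant.exists_mem_crease_lowerFamily [Finite ι] (h_irr : IsIrredundant l c)
    (h_neg : {j | c j < 0}.Nontrivial) :
    ∃ w ∈ crossingCone (upperFamily l c) (lowerFamily l c), w ∈ crease (lowerFamily l c) := by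
  obtain ⟨j, hj, k, hk, hjk⟩ := h_neg
  obtain ⟨p, hp, hpj⟩ := h_irr.exists_isDominant_lowerFamily ⟨j, hj⟩
  obtain ⟨q, hq, hqk⟩ := h_irr.exists_isDominant_lowerFamily ⟨k, hk⟩
  exact exists_mem_crease_of_isPreconnected convex_crossingCone.isPreconnected
    (Subtype.coe_ne_coe.1 hjk) hp hpj hq hqk

lemma exists_mem_rayPairs_nontrivial [FiniteDimensional ℝ E] (hE : 3 ≤ Module.finrank ℝ E)
    [Finite ι] (hc : ∀ i, c i ≠ 0) (hQ : Bornology.IsBounded (polyhedron l c))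
    (h_irr : IsIrredundant l c) (h_neg : {i | c i < 0}.Nontrivial)
    (h_pos : {i | 0 < c i}.Nontrivial) :
    ∃ p ∈ rayPairs l c {S | (S ∩ {i | c i < 0}).Nontrivial} {S | (S ∩ {i | 0 < c i}).Nontrivial},
      p.2 < 1 := by
  obtain ⟨k, hk⟩ := h_neg.nonempty
  have : Nonempty {j // c j < 0} := ⟨⟨k, hk⟩⟩
  have h_eq := normalizedPolyhedron_eq_polyhedron (l := l) hc
  have hQ_ne : (polyhedron l c).Nonempty := by
    obtain ⟨w, hwk, hw⟩ := h_irr k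
    refine ⟨w, fun i => ?_⟩
    rcases eq_or_ne i k with rfl | hik
    exacts [hwk.le, (hw i hik).le]
  rw [← h_eq] at hQ hQ_ne
  obtain ⟨w, hw, hwf, hwg⟩ := exists_mem_crease_inter_crease hE hQ hQ_ne
    (h_irr.exists_mem_crease_upperFamily h_pos) (h_irr.exists_mem_crease_lowerFamily h_neg)
  obtain ⟨v, hv, t, ht, htv, h_exit, h_entry⟩ := exists_ray_through_ridges hQ hQ_ne hw hwf hwg
  rw [h_eq] at hv htv
  refine ⟨(v, t), ⟨⟨hv, ht.1, ht.2.le⟩, htv, ?_, ?_⟩, ht.2⟩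
  · refine (h_entry.image Subtype.val_injective).mono ?_
    rintro _ ⟨j, hj, rfl⟩
    exact ⟨lowerFamily_apply_eq_neg_one_iff.1 hj, j.2⟩
  · refine (h_exit.image Subtype.val_injective).mono ?_
    rintro _ ⟨i, hi, rfl⟩
    exact ⟨upperFamily_apply_eq_one_iff.1 hi, i.2⟩

end SignedSystem

section RaysThroughFacets

open Set

variable {ι : Type*} {l : ι → E →L[ℝ] ℝ} {c : ι → ℝ}

/-- If two points of the polyhedron on a common ray from the origin have disjoint minimal faces,
then exactly one inequality is tight at one of them; in the irredundant case this says that it lies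
in the relative interior of a facet. -/
def RaysMeetFacetInteriors (l : ι → E →L[ℝ] ℝ) (c : ι → ℝ) : Prop :=
  ∀ v ∈ polyhedron l c, ∀ t ∈ Ioo (0 : ℝ) 1, t • v ∈ polyhedron l c →
    (∀ w ∈ polyhedron l c, activeSet l c (t • v) ⊆ activeSet l c w →
      ¬ activeSet l c v ⊆ activeSet l c w) →
    (∃ i, activeSet l c (t • v) = {i}) ∨ ∃ i, activeSet l c v = {i}

lemma nonpos_of_mem_activeSet_smul {v : E} {t : ℝ} (ht : t ∈ Ioo 0 1) (hv : v ∈ polyhedron l c)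
    {i : ι} (hi : i ∈ activeSet l c (t • v)) : c i ≤ 0 := by
  have h_eq : t * l i v = c i := by simpa [activeSet] using hi
  nlinarith [hv i, ht.1, ht.2]

lemma nonneg_of_mem_activeSet {v : E} {t : ℝ} (ht : t < 1) (htv : t • v ∈ polyhedron l c)
    {i : ι} (hi : i ∈ activeSet l c v) : 0 ≤ c i := by
  have h_eq : l i v = c i := hi
  have h_le : t * l i v ≤ c i := by simpa using htv i
  nlinarith

lemma raysMeetFacetInteriors_of_signs (hc : ∀ i, c i ≠ 0)
    (h_signs : {i | c i < 0}.Subsingleton ∨ {i | 0 < c i}.Subsingleton) :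
    RaysMeetFacetInteriors l c := by
  intro v hv t ht htv h_disj
  have h_entry : activeSet l c (t • v) ⊆ {i | c i < 0} :=
    fun i hi => (nonpos_of_mem_activeSet_smul ht hv hi).lt_of_ne (hc i)
  have h_exit : activeSet l c v ⊆ {i | 0 < c i} :=
    fun i hi => (nonneg_of_mem_activeSet ht.2 htv hi).lt_of_ne' (hc i)
  have h_entry_ne : (activeSet l c (t • v)).Nonempty := by
    rw [nonempty_iff_ne_empty]
    exact fun h_empty => h_disj v hv (h_empty ▸ empty_subset _) subset_rfl
  have h_exit_ne : (activeSet l c v).Nonempty := by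
    rw [nonempty_iff_ne_empty]
    exact fun h_empty => h_disj (t • v) htv subset_rfl (h_empty ▸ empty_subset _)
  simp only [exists_eq_singleton_iff_nonempty_subsingleton]
  exact h_signs.imp (fun h_neg => ⟨h_entry_ne, h_neg.anti h_entry⟩)
    (fun h_pos => ⟨h_exit_ne, h_pos.anti h_exit⟩)

lemma RaysMeetFacetInteriors.exists_mem_rayPairs_eq_singleton [Finite ι]
    (h_rays : RaysMeetFacetInteriors l c) (hQ : IsCompact (polyhedron l c))
    (h0 : (0 : E) ∉ polyhedron l c) {𝒜 ℬ : Set (Set ι)} (h𝒜 : IsUpperSet 𝒜) (hℬ : IsUpperSet ℬ)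
    (hne : ∃ p ∈ rayPairs l c 𝒜 ℬ, p.2 < 1) :
    ∃ v t, (v, t) ∈ rayPairs l c 𝒜 ℬ ∧ Disjoint (activeSet l c (t • v)) (activeSet l c v) ∧
      ((∃ i, activeSet l c (t • v) = {i}) ∨ ∃ i, activeSet l c v = {i}) := by
  obtain ⟨v, t, hp, ht, h_disj⟩ := exists_mem_rayPairs_disjoint_faces hQ h0 h𝒜 hℬ hne
  have h_singleton := h_rays v hp.1.1 t ht hp.2.1 h_disj
  refine ⟨v, t, hp, ?_, h_singleton⟩
  rcases h_singleton with ⟨i, hi⟩ | ⟨i, hi⟩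
  · rw [hi, disjoint_singleton_left, ← singleton_subset_iff, ← hi]
    exact fun h_sub => h_disj v hp.1.1 h_sub subset_rfl
  · rw [hi, disjoint_singleton_right, ← singleton_subset_iff, ← hi]
    exact fun h_sub => h_disj (t • v) hp.2.1 subset_rfl h_sub

lemma exists_mem_rayPairs_of_eq_zero [Finite ι] {i : ι} (hi : c i = 0) {w : E}
    (hw : l i w = c i) (hw_lt : ∀ k ≠ i, l k w < c k) :
    ∃ p ∈ rayPairs l c {S | i ∈ S} {S | i ∈ S}, p.2 < 1 := by
  have hwQ : w ∈ polyhedron l c := fun k => by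
    rcases eq_or_ne k i with rfl | hk
    exacts [hw.le, (hw_lt k hk).le]
  have h_active : activeSet l c w ⊆ activeSet l c 0 := fun k hk => by
    obtain rfl : k = i := by_contra fun h_ne => (hw_lt k h_ne).ne hk
    simp [activeSet, hi]
  obtain ⟨ε, hεQ, hε : 0 < ε⟩ :=
    ((eventually_add_smul_sub_mem_polyhedron hwQ h_active).and self_mem_nhdsWithin).exists
  have h_eq : w + ε • (w - 0) = (1 + ε) • w := by module
  have h_inv : (1 + ε)⁻¹ • (1 + ε) • w = w := inv_smul_smul₀ (by positivity) w
  rw [h_eq] at hεQ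
  have h_lt : (1 + ε)⁻¹ < 1 := inv_lt_one_of_one_lt₀ (by linarith)
  refine ⟨((1 + ε) • w, (1 + ε)⁻¹), ⟨⟨hεQ, by positivity, h_lt.le⟩, ?_⟩, h_lt⟩
  simp only [mem_ofPred_eq, h_inv]
  exact ⟨hwQ, hw, by simp [activeSet, hw, hi]⟩

lemma RaysMeetFacetInteriors.ne_zero [Finite ι] (h_rays : RaysMeetFacetInteriors l c)
    (hQ : IsCompact (polyhedron l c)) (h0 : (0 : E) ∉ polyhedron l c) (h_irr : IsIrredundant l c)
    (i : ι) : c i ≠ 0 := by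
  intro hi
  have h_upper : IsUpperSet {S : Set ι | i ∈ S} := fun S S' hSS' hiS => hSS' hiS
  obtain ⟨w, hw, hw_lt⟩ := h_irr i
  obtain ⟨v, t, hp, h_disj, -⟩ := h_rays.exists_mem_rayPairs_eq_singleton hQ h0 h_upper h_upper
    (exists_mem_rayPairs_of_eq_zero hi hw hw_lt)
  exact h_disj.notMem_of_mem_left hp.2.2.1 hp.2.2.2

lemma RaysMeetFacetInteriors.subsingleton_signs [FiniteDimensional ℝ E] [Finite ι]
    (hE : 3 ≤ Module.finrank ℝ E) (h_rays : RaysMeetFacetInteriors l c)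
    (hQ : IsCompact (polyhedron l c)) (h0 : (0 : E) ∉ polyhedron l c)
    (h_irr : IsIrredundant l c) :
    {i | c i < 0}.Subsingleton ∨ {i | 0 < c i}.Subsingleton := by
  by_contra! h_signs
  obtain ⟨h_neg, h_pos⟩ := h_signs
  have h_upper (A : Set ι) : IsUpperSet {S : Set ι | (S ∩ A).Nontrivial} :=
    fun S S' hSS' hS => hS.mono (inter_subset_inter_left A hSS')
  obtain ⟨v, t, ⟨-, -, h_entry : (activeSet l c (t • v) ∩ {i | c i < 0}).Nontrivial,
      h_exit : (activeSet l c v ∩ {i | 0 < c i}).Nontrivial⟩, -, h_singleton⟩ :=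
    h_rays.exists_mem_rayPairs_eq_singleton hQ h0 (h_upper {i | c i < 0}) (h_upper {i | 0 < c i})
      (exists_mem_rayPairs_nontrivial hE (h_rays.ne_zero hQ h0 h_irr) hQ.isBounded h_irr
        h_neg h_pos)
  rcases h_singleton with ⟨i, hi⟩ | ⟨i, hi⟩
  · exact (h_entry.mono inter_subset_left).ne_singleton hi
  · exact (h_exit.mono inter_subset_left).ne_singleton hi

lemma nonempty_setOf_neg (h0 : (0 : E) ∉ polyhedron l c) : {i | c i < 0}.Nonempty := by
  by_contra! h_empty
  exact h0 fun i => by simpa using (h_empty ▸ notMem_empty i : i ∉ {i | c i < 0})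

lemma nonempty_setOf_pos (hQ : Bornology.IsBounded (polyhedron l c))
    (hne : (polyhedron l c).Nonempty) (h0 : (0 : E) ∉ polyhedron l c) :
    {i | 0 < c i}.Nonempty := by
  by_contra! h_empty
  obtain ⟨q, hq⟩ := hne
  have h_nonpos (i : ι) : c i ≤ 0 := by
    simpa using (h_empty ▸ notMem_empty i : i ∉ {i | 0 < c i})
  have hq0 : q = 0 :=
    eq_zero_of_forall_nonpos_of_isBounded hQ ⟨q, hq⟩ fun i => (hq i).trans (h_nonpos i)
  exact h0 (hq0 ▸ hq)

theorem raysMeetFacetInteriors_iff [FiniteDimensional ℝ E] [Finite ι]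
    (hE : 3 ≤ Module.finrank ℝ E) (hQ : IsCompact (polyhedron l c))
    (hne : (polyhedron l c).Nonempty) (h0 : (0 : E) ∉ polyhedron l c)
    (h_irr : IsIrredundant l c) :
    RaysMeetFacetInteriors l c ↔
      (∀ i, c i ≠ 0) ∧ ((∃ i₀, 0 < c i₀ ∧ ∀ i ≠ i₀, c i < 0) ∨
        ∃ i₀, c i₀ < 0 ∧ ∀ i ≠ i₀, 0 < c i) := by
  constructor
  · intro h_rays
    have hc := h_rays.ne_zero hQ h0 h_irr
    refine ⟨hc, (h_rays.subsingleton_signs hE hQ h0 h_irr).symm.imp (fun h_pos => ?_)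
      (fun h_neg => ?_)⟩
    · obtain ⟨i₀, hi₀⟩ := nonempty_setOf_pos hQ.isBounded hne h0
      exact ⟨i₀, hi₀, fun i hi => (hc i).lt_of_le (not_lt.1 fun h => hi (h_pos h hi₀))⟩
    · obtain ⟨i₀, hi₀⟩ := nonempty_setOf_neg h0
      exact ⟨i₀, hi₀, fun i hi => (hc i).lt_of_le' (not_lt.1 fun h => hi (h_neg h hi₀))⟩
  · rintro ⟨hc, ⟨i₀, -, h_neg⟩ | ⟨i₀, -, h_pos⟩⟩
    · refine raysMeetFacetInteriors_of_signs hc (Or.inr (subsingleton_of_forall_eq i₀ ?_))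
      exact fun i hi => by_contra fun h_ne => (h_neg i h_ne).not_gt hi
    · refine raysMeetFacetInteriors_of_signs hc (Or.inl (subsingleton_of_forall_eq i₀ ?_))
      exact fun i hi => by_contra fun h_ne => (h_pos i h_ne).not_gt hi

end RaysThroughFacets

section SupportingHyperplane

open Set

variable {P F : Set E} {l : E →L[ℝ] ℝ} {b : ℝ}

/-- The inequality `l ≤ b` is valid on `P`, tight exactly on `F`, and `F` affinely spans the
hyperplane `l = b`. -/
structure SupportsFacet (P F : Set E) (l : E →L[ℝ] ℝ) (b : ℝ) : Prop where
  ne_zero : l ≠ 0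
  le : ∀ y ∈ P, l y ≤ b
  mem_iff : ∀ y, y ∈ F ↔ y ∈ P ∧ l y = b
  mem_affineSpan_iff : ∀ y, y ∈ affineSpan ℝ F ↔ l y = b

lemma direction_affineSpan_le_ker (hF : ∀ y ∈ F, l y = b) :
    (affineSpan ℝ F).direction ≤ LinearMap.ker (l : E →ₗ[ℝ] ℝ) := by
  rw [direction_affineSpan, vectorSpan_def, Submodule.span_le]
  rintro _ ⟨y, hy, z, hz, rfl⟩
  simp [hF y hy, hF z hz]

lemma IsFacet.nonempty (hE : 2 ≤ Module.finrank ℝ E) (hF : IsFacet P F) : F.Nonempty := by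
  rw [nonempty_iff_ne_empty]
  rintro rfl
  have h_rank := hF.2
  rw [AffineSubspace.span_empty, AffineSubspace.direction_bot, finrank_bot] at h_rank
  lia

lemma IsFacet.supportsFacet [FiniteDimensional ℝ E] (hF : IsFacet P F) (hne : F.Nonempty)
    (hl : l ≠ 0) (hle : ∀ y ∈ P, l y ≤ b) (h_mem : ∀ y, y ∈ F ↔ y ∈ P ∧ l y = b) :
    SupportsFacet P F l b := by
  obtain ⟨p, hp⟩ := hne
  have hpb := ((h_mem p).1 hp).2
  have h_dir : (affineSpan ℝ F).direction = LinearMap.ker (l : E →ₗ[ℝ] ℝ) :=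
    Submodule.eq_of_le_of_finrank_eq (direction_affineSpan_le_ker fun y hy => ((h_mem y).1 hy).2)
      (add_right_cancel (hF.2.trans (finrank_ker_add_one hl).symm))
  refine ⟨hl, hle, h_mem, fun y => ?_⟩
  rw [← AffineSubspace.vsub_right_mem_direction_iff_mem (subset_affineSpan ℝ F hp), h_dir]
  simp [sub_eq_zero, hpb]

lemma IsFacet.exists_supportsFacet [FiniteDimensional ℝ E] (hE : 2 ≤ Module.finrank ℝ E)
    (hP : affineSpan ℝ P = ⊤) (hF : IsFacet P F) : ∃ l b, SupportsFacet P F l b := by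
  obtain ⟨p, hp⟩ := hF.nonempty hE
  obtain ⟨l, hl⟩ := hF.1 ⟨p, hp⟩
  obtain ⟨hpP, hp_max⟩ : p ∈ {y ∈ P | ∀ z ∈ P, l z ≤ l y} := hl ▸ hp
  have h_mem (y : E) : y ∈ F ↔ y ∈ P ∧ l y = l p := by
    rw [hl]
    exact and_congr_right fun hy => ⟨fun hy_max => (hp_max y hy).antisymm (hy_max p hpP),
      fun h_eq z hz => (hp_max z hz).trans_eq h_eq.symm⟩
  have hl_ne : l ≠ 0 := by
    rintro rfl
    have hFP : F = P := by
      ext y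
      simp [h_mem]
    have h_rank := hF.2
    rw [hFP, hP, AffineSubspace.direction_top, finrank_top] at h_rank
    lia
  exact ⟨l, l p, hF.supportsFacet ⟨p, hp⟩ hl_ne hp_max h_mem⟩

namespace SupportsFacet

lemma nonempty (h : SupportsFacet P F l b) : F.Nonempty := by
  obtain ⟨y, hy⟩ := LinearMap.surjective (f := (l : E →ₗ[ℝ] ℝ))
    (fun hl => h.ne_zero (ContinuousLinearMap.coe_injective hl)) b
  exact (affineSpan_nonempty ℝ).1 ⟨y, (h.mem_affineSpan_iff y).2 hy⟩

lemma lt_of_mem_interior (h : SupportsFacet P F l b) {y : E} (hy : y ∈ interior P) : l y < b :=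
  BoydMaxwell.lt_of_mem_interior h.ne_zero h.le hy

lemma sOppSide (h : SupportsFacet P F l b) {x y : E} (hx : b < l x) (hy : l y < b) :
    (affineSpan ℝ F).SOppSide x y := by
  have hxy : 0 < l x - l y := by linarith
  set r := (l x - b) / (l x - l y)
  have hr : r ∈ Ioo (0 : ℝ) 1 :=
    ⟨div_pos (by linarith) hxy, (div_lt_one hxy).2 (by linarith)⟩
  have hz : l (AffineMap.lineMap x y r) = b := by
    rw [AffineMap.lineMap_apply_module', map_add, map_smul, map_sub, smul_eq_mul]
    simp only [r]
    field_simp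
    ring
  have hxy_ne : x ≠ y := fun h_eq => by simp [h_eq] at hxy
  exact (sbtw_lineMap_iff.2 ⟨hxy_ne, hr⟩).sOppSide_of_notMem_of_mem
    ((h.mem_affineSpan_iff x).not.2 hx.ne') ((h.mem_affineSpan_iff _).2 hz)

lemma sSameSide (h : SupportsFacet P F l b) {x y : E} (hx : l x < b) (hy : l y < b) :
    (affineSpan ℝ F).SSameSide x y := by
  obtain ⟨p, hp⟩ := h.nonempty
  have hpb := ((h.mem_iff p).1 hp).2
  have hz : b < l (p + (p - y)) := by
    rw [map_add, map_sub, hpb]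
    linarith
  exact (h.sOppSide hz hx).symm.trans (h.sOppSide hz hy)

lemma beneath_iff (h : SupportsFacet P F l b) (hP : (interior P).Nonempty) {x : E} :
    Beneath P F x ↔ l x < b := by
  refine ⟨fun hx => ?_, fun hx y hy => h.sSameSide hx (h.lt_of_mem_interior hy)⟩
  obtain ⟨y, hy⟩ := hP
  by_contra! hbx
  rcases hbx.eq_or_lt with h_eq | h_lt
  · exact (hx y hy).left_notMem ((h.mem_affineSpan_iff x).2 h_eq.symm)
  · exact (hx y hy).not_sOppSide (h.sOppSide h_lt (h.lt_of_mem_interior hy))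

lemma beyond_iff (h : SupportsFacet P F l b) (hP : (interior P).Nonempty) {x : E} :
    Beyond P F x ↔ b < l x := by
  refine ⟨fun hx => ?_, fun hx y hy => h.sOppSide hx (h.lt_of_mem_interior hy)⟩
  obtain ⟨y, hy⟩ := hP
  by_contra! hxb
  rcases hxb.eq_or_lt with h_eq | h_lt
  · exact (hx y hy).left_notMem ((h.mem_affineSpan_iff x).2 h_eq)
  · exact (h.sSameSide h_lt (h.lt_of_mem_interior hy)).not_sOppSide (hx y hy)

end SupportsFacet

end SupportingHyperplane

section Polar

open Set Filter Topology

variable {T : Set E} {o : E} {l : E →L[ℝ] ℝ}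

/-- The polar body of `T` with base point `o`, a polyhedron in the dual space with one inequality
`l (v - o) ≤ 1` for each `v ∈ T`. -/
def polarBody (T : Set E) (o : E) : Set (E →L[ℝ] ℝ) :=
  polyhedron (fun v : T => ContinuousLinearMap.apply ℝ ℝ (v - o)) 1

lemma mem_polarBody : l ∈ polarBody T o ↔ ∀ v ∈ T, l (v - o) ≤ 1 := by
  simp [polarBody, polyhedron]

lemma apply_le_of_mem_polarBody (hl : l ∈ polarBody T o) {y : E} (hy : y ∈ convexHull ℝ T) :
    l y ≤ 1 + l o := by
  refine convexHull_min (fun v hv => ?_) (convex_halfSpace_le l.isLinear (1 + l o)) hy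
  simpa [sub_le_iff_le_add] using mem_polarBody.1 hl v hv

lemma isCompact_polarBody [FiniteDimensional ℝ E] (ho : o ∈ interior (convexHull ℝ T)) :
    IsCompact (polarBody T o) := by
  have h_nhds : {z | o + z ∈ convexHull ℝ T ∧ o - z ∈ convexHull ℝ T} ∈ 𝓝 (0 : E) := by
    have h_mem := mem_interior_iff_mem_nhds.1 ho
    have h_add : Tendsto (fun z : E => o + z) (𝓝 0) (𝓝 o) :=
      Continuous.tendsto' (by fun_prop) _ _ (by simp)
    have h_sub : Tendsto (fun z : E => o - z) (𝓝 0) (𝓝 o) :=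
      Continuous.tendsto' (by fun_prop) _ _ (by simp)
    exact inter_mem (h_add h_mem) (h_sub h_mem)
  refine Metric.isCompact_of_isClosed_isBounded isClosed_polyhedron
    ((NormedSpace.isBounded_polar_of_mem_nhds_zero ℝ h_nhds).subset fun l hl z hz => ?_)
  have h_upper := apply_le_of_mem_polarBody hl hz.1
  have h_lower := apply_le_of_mem_polarBody hl hz.2
  rw [map_add] at h_upper
  rw [map_sub] at h_lower
  exact abs_le.2 ⟨by simp; linarith, by simp; linarith⟩

lemma exists_mem_polarBody_lt (hT : T.Finite) (ho : o ∈ convexHull ℝ T) {z : E}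
    (hz : z ∉ convexHull ℝ T) : ∃ l ∈ polarBody T o, 1 < l (z - o) := by
  obtain ⟨m, r, hm, hr⟩ := geometric_hahn_banach_closed_point (convex_convexHull ℝ T)
    (hT.isCompact_convexHull ℝ).isClosed hz
  have h_pos : 0 < r - m o := sub_pos.2 (hm o ho)
  refine ⟨(r - m o)⁻¹ • m, mem_polarBody.2 fun v hv => ?_, ?_⟩
  · rw [smul_apply, smul_eq_mul, map_sub, inv_mul_le_iff₀ h_pos, mul_one]
    linarith [hm v (subset_convexHull ℝ T hv)]
  · rw [smul_apply, smul_eq_mul, map_sub, lt_inv_mul_iff₀ h_pos, mul_one]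
    linarith

lemma exists_mem_extremePoints_polarBody_lt [FiniteDimensional ℝ E] (hT : T.Finite)
    (ho : o ∈ interior (convexHull ℝ T)) {z : E} (hz : z ∉ convexHull ℝ T) :
    ∃ l ∈ (polarBody T o).extremePoints ℝ, 1 < l (z - o) := by
  obtain ⟨m, hm, hmz⟩ := exists_mem_polarBody_lt hT (interior_subset ho) hz
  by_contra! h_le
  rw [← closure_convexHull_extremePoints (isCompact_polarBody ho) convex_polyhedron] at hm
  have h_half : Convex ℝ {l : E →L[ℝ] ℝ | l (z - o) ≤ 1} :=
    convex_halfSpace_le (ContinuousLinearMap.apply ℝ ℝ (z - o)).isLinear 1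
  have h_closed : IsClosed {l : E →L[ℝ] ℝ | l (z - o) ≤ 1} :=
    isClosed_le (ContinuousLinearMap.apply ℝ ℝ (z - o)).continuous continuous_const
  exact hmz.not_ge (closure_minimal (convexHull_min h_le h_half) h_closed hm)

lemma eq_smul_of_mem_extremePoints_polarBody (hT : T.Finite)
    (hl : l ∈ (polarBody T o).extremePoints ℝ) {m : E →L[ℝ] ℝ} {β : ℝ}
    (hm : ∀ v ∈ T, l (v - o) = 1 → m (v - o) = β) : m = β • l := by
  have := hT.to_subtype
  have h_eq : l + (m - β • l) = l := by
    refine eq_of_mem_extremePoints_of_activeSet_subset hl fun v hv => ?_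
    have hlv : l (v - o) = 1 := hv
    change (l + (m - β • l)) (v - o) = 1
    rw [add_apply, sub_apply, smul_apply, hlv, hm v v.2 hlv, smul_eq_mul, mul_one, sub_self,
      add_zero]
  rwa [add_eq_left, sub_eq_zero] at h_eq

lemma exists_apply_eq_one_of_mem_extremePoints_polarBody (hT : T.Finite)
    (hl : l ∈ (polarBody T o).extremePoints ℝ) (hl_ne : l ≠ 0) : ∃ v ∈ T, l (v - o) = 1 := by
  by_contra! h_none
  exact hl_ne ((eq_smul_of_mem_extremePoints_polarBody (m := l) (β := 0) hT hl
    fun v hv hlv => absurd hlv (h_none v hv)).trans (zero_smul ℝ l))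

/-- Were the direction smaller than `ker l`, some functional off the line `ℝ l` would be constant
on the tight vertices. -/
lemma ker_le_direction_of_mem_extremePoints_polarBody [FiniteDimensional ℝ E] (hT : T.Finite)
    (hl : l ∈ (polarBody T o).extremePoints ℝ) {v₀ : E} (hv₀ : v₀ ∈ T) (hlv₀ : l (v₀ - o) = 1) :
    LinearMap.ker (l : E →ₗ[ℝ] ℝ) ≤ (affineSpan ℝ {v ∈ T | l (v - o) = 1}).direction := by
  intro y hy
  by_contra hy_dir
  obtain ⟨m, hmy, hm⟩ := Submodule.exists_le_ker_of_notMem hy_dir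
  have h_const (v : E) (hv : v ∈ T) (hlv : l (v - o) = 1) : m (v - o) = m (v₀ - o) := by
    have h_diff : m (v - v₀) = 0 := hm (AffineSubspace.vsub_mem_direction
      (subset_affineSpan ℝ _ ⟨hv, hlv⟩) (subset_affineSpan ℝ _ ⟨hv₀, hlv₀⟩))
    rw [← sub_eq_zero, ← map_sub, sub_sub_sub_cancel_right, h_diff]
  have h_smul : m.toContinuousLinearMap = m (v₀ - o) • l :=
    eq_smul_of_mem_extremePoints_polarBody hT hl h_const
  have hly : l y = 0 := hy
  exact hmy (by simpa [hly] using DFunLike.congr_fun h_smul y)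

lemma supportsFacet_of_mem_extremePoints_polarBody [FiniteDimensional ℝ E] (hT : T.Finite)
    (hl : l ∈ (polarBody T o).extremePoints ℝ) (hl_ne : l ≠ 0) :
    IsFacet (convexHull ℝ T) {y ∈ convexHull ℝ T | l y = 1 + l o} ∧
      SupportsFacet (convexHull ℝ T) {y ∈ convexHull ℝ T | l y = 1 + l o} l (1 + l o) := by
  set F := {y ∈ convexHull ℝ T | l y = 1 + l o}
  have h_le (y : E) (hy : y ∈ convexHull ℝ T) : l y ≤ 1 + l o := apply_le_of_mem_polarBody hl.1 hy
  have h_tight : {v ∈ T | l (v - o) = 1} ⊆ F := fun v ⟨hv, hlv⟩ =>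
    ⟨subset_convexHull ℝ T hv, by rw [← hlv, map_sub, sub_add_cancel]⟩
  obtain ⟨v₀, hv₀, hlv₀⟩ := exists_apply_eq_one_of_mem_extremePoints_polarBody hT hl hl_ne
  have hv₀F : v₀ ∈ F := h_tight ⟨hv₀, hlv₀⟩
  have h_dir : (affineSpan ℝ F).direction = LinearMap.ker (l : E →ₗ[ℝ] ℝ) :=
    (direction_affineSpan_le_ker fun y hy => hy.2).antisymm
      ((ker_le_direction_of_mem_extremePoints_polarBody hT hl hv₀ hlv₀).trans
        (AffineSubspace.direction_le (affineSpan_mono ℝ h_tight)))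
  have h_exposed : IsExposed ℝ (convexHull ℝ T) F := fun _ => ⟨l, by
    ext y
    exact and_congr_right fun hy => ⟨fun h_eq z hz => (h_le z hz).trans_eq h_eq.symm,
      fun h_max => (h_le y hy).antisymm (hv₀F.2.symm.trans_le (h_max v₀ hv₀F.1))⟩⟩
  have h_facet : IsFacet (convexHull ℝ T) F := ⟨h_exposed, by rw [h_dir, finrank_ker_add_one hl_ne]⟩
  exact ⟨h_facet, h_facet.supportsFacet ⟨v₀, hv₀F⟩ hl_ne h_le fun y => Iff.rfl⟩

lemma exists_isFacet_beyond [FiniteDimensional ℝ E] (hT : T.Finite)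
    (h_int : (interior (convexHull ℝ T)).Nonempty) {z : E} (hz : z ∉ convexHull ℝ T) :
    ∃ F, IsFacet (convexHull ℝ T) F ∧ Beyond (convexHull ℝ T) F z := by
  obtain ⟨o, ho⟩ := id h_int
  obtain ⟨l, hl, hlz⟩ := exists_mem_extremePoints_polarBody_lt hT ho hz
  have hl_ne : l ≠ 0 := fun h => by
    rw [h, zero_apply] at hlz
    linarith
  obtain ⟨hF, h_supp⟩ := supportsFacet_of_mem_extremePoints_polarBody hT hl hl_ne
  refine ⟨_, hF, (h_supp.beyond_iff h_int).2 ?_⟩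
  rw [map_sub] at hlz
  linarith

end Polar

section FacetDescription

open Set Filter Topology

lemma exposed_eq_convexHull_inter {T F : Set E} (hT : T.Finite)
    (hF : IsExposed ℝ (convexHull ℝ T) F) : F = convexHull ℝ (F ∩ T) := by
  have h_conv : Convex ℝ F := hF.convex (convex_convexHull ℝ T)
  refine Subset.antisymm ?_ (convexHull_min inter_subset_left h_conv)
  have h_ext : F.extremePoints ℝ ⊆ F ∩ T := fun y hy =>
    ⟨hy.1, extremePoints_convexHull_subset (hF.isExtreme.extremePoints_subset_extremePoints hy)⟩
  have h_closed : IsClosed (convexHull ℝ (F ∩ T)) :=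
    ((hT.subset inter_subset_right).isCompact_convexHull ℝ).isClosed
  calc F = closure (convexHull ℝ (F.extremePoints ℝ)) :=
        (closure_convexHull_extremePoints (hF.isCompact (hT.isCompact_convexHull ℝ)) h_conv).symm
    _ ⊆ convexHull ℝ (F ∩ T) := closure_minimal (convexHull_mono h_ext) h_closed

lemma finite_isFacet_convexHull {T : Set E} (hT : T.Finite) :
    Finite {F // IsFacet (convexHull ℝ T) F} := by
  refine ((hT.powerset.image (convexHull ℝ)).subset (fun F hF => ?_) :
    {F | IsFacet (convexHull ℝ T) F}.Finite).to_subtype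
  exact ⟨F ∩ T, inter_subset_right, (exposed_eq_convexHull_inter hT hF.1).symm⟩

variable {P : Set E} {l : {F // IsFacet P F} → E →L[ℝ] ℝ} {b : {F // IsFacet P F} → ℝ}

/-- A presentation of `P` as a polyhedron with one supporting inequality for each facet. -/
structure IsFacetDescription (P : Set E) (l : {F // IsFacet P F} → E →L[ℝ] ℝ)
    (b : {F // IsFacet P F} → ℝ) : Prop where
  supportsFacet : ∀ F : {F // IsFacet P F}, SupportsFacet P F (l F) (b F)
  eq_polyhedron : P = polyhedron l b

lemma exists_isFacetDescription [FiniteDimensional ℝ E] (hE : 2 ≤ Module.finrank ℝ E) {T : Set E}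
    (hT : T.Finite) (hP : P = convexHull ℝ T) (h_span : affineSpan ℝ P = ⊤) :
    ∃ l b, IsFacetDescription P l b := by
  have h_int : (interior P).Nonempty :=
    (hP ▸ convex_convexHull ℝ T : Convex ℝ P).interior_nonempty_iff_affineSpan_eq_top.2 h_span
  choose l b h_supp using fun F : {F // IsFacet P F} => F.2.exists_supportsFacet hE h_span
  refine ⟨l, b, h_supp, Subset.antisymm (fun y hy F => (h_supp F).le y hy) fun y hy => ?_⟩
  by_contra hyP
  subst hP
  obtain ⟨F, hF, hy_beyond⟩ := exists_isFacet_beyond hT h_int hyP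
  exact (hy ⟨F, hF⟩).not_gt (((h_supp ⟨F, hF⟩).beyond_iff h_int).1 hy_beyond)

lemma IsFacet.eq_of_subset [FiniteDimensional ℝ E] {F G : Set E} {m n : E →L[ℝ] ℝ} {a d : ℝ}
    (hF : IsFacet P F) (hG : IsFacet P G) (hF_supp : SupportsFacet P F m a)
    (hG_supp : SupportsFacet P G n d) (hFG : F ⊆ G) : F = G := by
  have h_le : affineSpan ℝ F ≤ affineSpan ℝ G := affineSpan_mono ℝ hFG
  have h_eq : affineSpan ℝ F = affineSpan ℝ G :=
    AffineSubspace.eq_of_direction_eq_of_nonempty_of_le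
      (Submodule.eq_of_le_of_finrank_eq (AffineSubspace.direction_le h_le)
        (add_right_cancel (hF.2.trans hG.2.symm)))
      ((affineSpan_nonempty ℝ).2 hF_supp.nonempty) h_le
  ext y
  rw [hF_supp.mem_iff, hG_supp.mem_iff, ← hF_supp.mem_affineSpan_iff, h_eq,
    hG_supp.mem_affineSpan_iff]

lemma eventually_add_smul_sub_mem_of_mem_intrinsicInterior {F : Set E} {y w : E}
    (hy : y ∈ intrinsicInterior ℝ F) (hw : w ∈ F) :
    ∀ᶠ ε in 𝓝[>] (0 : ℝ), y + ε • (y - w) ∈ F := by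
  obtain ⟨y, hy_int, rfl⟩ := mem_intrinsicInterior.1 hy
  have h_line (ε : ℝ) : (y : E) + ε • ((y : E) - w) ∈ affineSpan ℝ F := by
    rw [add_comm]
    exact AffineSubspace.smul_vsub_vadd_mem _ ε y.2 (subset_affineSpan ℝ F hw) y.2
  have h_cont : Tendsto (fun ε => (⟨_, h_line ε⟩ : affineSpan ℝ F)) (𝓝 0) (𝓝 y) :=
    Continuous.tendsto' (by fun_prop) _ _ (by simp)
  exact (h_cont.mono_left nhdsWithin_le_nhds).eventually (mem_interior_iff_mem_nhds.1 hy_int)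

lemma apply_eq_of_mem_intrinsicInterior {F : Set E} {m : E →L[ℝ] ℝ} {a : ℝ}
    (hm : ∀ w ∈ F, m w ≤ a) {y : E} (hy : y ∈ intrinsicInterior ℝ F) (hya : m y = a) {w : E}
    (hw : w ∈ F) : m w = a := by
  obtain ⟨ε, hεF, hε : 0 < ε⟩ := ((eventually_add_smul_sub_mem_of_mem_intrinsicInterior hy hw).and
    self_mem_nhdsWithin).exists
  have h_le := hm _ hεF
  rw [map_add, map_smul, map_sub, hya, smul_eq_mul, add_le_iff_nonpos_right] at h_le
  exact (hm w hw).antisymm (sub_nonpos.1 (nonpos_of_mul_nonpos_right h_le hε))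

namespace IsFacetDescription

lemma activeSet_eq_singleton_of_mem_intrinsicInterior [FiniteDimensional ℝ E]
    (h : IsFacetDescription P l b) {F : {F // IsFacet P F}} {y : E}
    (hy : y ∈ intrinsicInterior ℝ (F : Set E)) :
    activeSet l b y = {F} := by
  have h_supp := h.supportsFacet F
  have hyF := (h_supp.mem_iff y).1 (intrinsicInterior_subset hy)
  refine Subset.antisymm (fun G hG => Subtype.ext ?_) (singleton_subset_iff.2 hyF.2)
  have hFP {w : E} (hw : w ∈ (F : Set E)) : w ∈ P := ((h_supp.mem_iff w).1 hw).1
  have hFG : (F : Set E) ⊆ G := fun w hw => ((h.supportsFacet G).mem_iff w).2 ⟨hFP hw,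
    apply_eq_of_mem_intrinsicInterior (fun w hw => (h.supportsFacet G).le w (hFP hw)) hy hG hw⟩
  exact (F.2.eq_of_subset G.2 h_supp (h.supportsFacet G) hFG).symm

lemma mem_intrinsicInterior_of_activeSet_eq_singleton [Finite {F // IsFacet P F}]
    (h : IsFacetDescription P l b) {F : {F // IsFacet P F}} {y : E} (hy : y ∈ P)
    (hyF : activeSet l b y = {F}) :
    y ∈ intrinsicInterior ℝ (F : Set E) := by
  have h_supp := h.supportsFacet F
  have h_span : y ∈ affineSpan ℝ (F : Set E) :=
    (h_supp.mem_affineSpan_iff y).2 (hyF.ge (mem_singleton F))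
  refine mem_intrinsicInterior.2 ⟨⟨y, h_span⟩, mem_interior_iff_mem_nhds.2 ?_, rfl⟩
  have h_nhds : ∀ᶠ z : affineSpan ℝ (F : Set E) in 𝓝 ⟨y, h_span⟩, ∀ G ≠ F, l G z < b G := by
    simp only [eventually_all]
    intro G hGF
    have h_lt : l G y < b G := ((h.supportsFacet G).le y hy).lt_of_ne fun h_eq => hGF (hyF.le h_eq)
    have h_cont : Continuous fun z : affineSpan ℝ (F : Set E) => l G z := by fun_prop
    exact (h_cont.tendsto ⟨y, h_span⟩).eventually_lt_const h_lt
  filter_upwards [h_nhds] with z hz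
  have hzF := (h_supp.mem_affineSpan_iff z).1 z.2
  refine (h_supp.mem_iff z).2 ⟨h.eq_polyhedron.ge fun G => ?_, hzF⟩
  rcases eq_or_ne G F with rfl | hGF
  exacts [hzF.le, (hz G hGF).le]

lemma exists_mem_intrinsicInterior_iff [FiniteDimensional ℝ E] [Finite {F // IsFacet P F}]
    (h : IsFacetDescription P l b) {y : E} (hy : y ∈ P) :
    (∃ F, IsFacet P F ∧ y ∈ intrinsicInterior ℝ F) ↔ ∃ F, activeSet l b y = {F} :=
  ⟨fun ⟨F, hF, hyF⟩ => ⟨⟨F, hF⟩, h.activeSet_eq_singleton_of_mem_intrinsicInterior hyF⟩,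
    fun ⟨F, hyF⟩ => ⟨F, F.2, h.mem_intrinsicInterior_of_activeSet_eq_singleton hy hyF⟩⟩

lemma isIrredundant [FiniteDimensional ℝ E] (h : IsFacetDescription P l b) (hP : Convex ℝ P) :
    IsIrredundant l b := by
  intro F
  obtain ⟨y, hy⟩ := Set.Nonempty.intrinsicInterior (F.2.1.convex hP) (h.supportsFacet F).nonempty
  have h_active := h.activeSet_eq_singleton_of_mem_intrinsicInterior hy
  have hyP : y ∈ P := (((h.supportsFacet F).mem_iff y).1 (intrinsicInterior_subset hy)).1
  exact ⟨y, h_active.ge (mem_singleton F), fun G hGF =>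
    ((h.supportsFacet G).le y hyP).lt_of_ne fun h_eq => hGF (h_active.le h_eq)⟩

end IsFacetDescription

end FacetDescription

section LinesThroughPoint

open Set

variable {ι : Type*} {l : ι → E →L[ℝ] ℝ} {b : ι → ℝ} {x : E}

/-- The right-hand sides of the system `l i ≤ b i` after translating `x` to the origin; if the
`i`-th inequality supports a facet, the sign tells whether `x` is beneath or beyond it. -/
def slack (l : ι → E →L[ℝ] ℝ) (b : ι → ℝ) (x : E) (i : ι) : ℝ :=
  b i - l i x

lemma sub_mem_polyhedron_slack_iff {y : E} :
    y - x ∈ polyhedron l (slack l b x) ↔ y ∈ polyhedron l b := by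
  simp [polyhedron, slack]

lemma activeSet_slack_sub (y : E) :
    activeSet l (slack l b x) (y - x) = activeSet l b y := by
  simp [activeSet, slack]

lemma polyhedron_slack : polyhedron l (slack l b x) = (· - x) '' polyhedron l b := by
  ext w
  constructor
  · intro hw
    exact ⟨w + x, sub_mem_polyhedron_slack_iff.1 (by rwa [add_sub_cancel_right]),
      add_sub_cancel_right w x⟩
  · rintro ⟨y, hy, rfl⟩
    exact sub_mem_polyhedron_slack_iff.2 hy

lemma IsIrredundant.slack (h_irr : IsIrredundant l b) (x : E) :
    IsIrredundant l (slack l b x) := fun i => by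
  obtain ⟨w, hw, hw_lt⟩ := h_irr i
  exact ⟨w - x, by simp [BoydMaxwell.slack, hw], fun k hk => by
    simpa [BoydMaxwell.slack] using hw_lt k hk⟩

lemma raysMeetFacetInteriors_slack_iff :
    RaysMeetFacetInteriors l (slack l b x) ↔
      ∀ u ∈ polyhedron l b, ∀ v ∈ polyhedron l b, ∀ t ∈ Ioo (0 : ℝ) 1, u - x = t • (v - x) →
        (∀ w ∈ polyhedron l b, activeSet l b u ⊆ activeSet l b w →
          ¬ activeSet l b v ⊆ activeSet l b w) →
        (∃ i, activeSet l b u = {i}) ∨ ∃ i, activeSet l b v = {i} := by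
  simp only [RaysMeetFacetInteriors, polyhedron_slack, forall_mem_image, activeSet_slack_sub]
  constructor
  · intro h_rays u hu v hv t ht huv
    simpa only [← huv, activeSet_slack_sub] using h_rays hv t ht (huv ▸ mem_image_of_mem _ hu)
  · rintro h_rays v hv t ht ⟨u, hu, huv : u - x = t • (v - x)⟩
    simpa only [← huv, activeSet_slack_sub] using h_rays u hu v hv t ht huv

lemma exists_smul_eq_of_collinear {P : Set E} (hP : Convex ℝ P) (hx : x ∉ P) {u v : E}
    (hu : u ∈ P) (hv : v ∈ P) (huv : u ≠ v) (h_col : Collinear ℝ {x, u, v}) :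
    ∃ t ∈ Ioo (0 : ℝ) 1, u - x = t • (v - x) ∨ v - x = t • (u - x) := by
  have h_of_wbtw {y z : E} (hy : y ∈ P) (hyz : y ≠ z) (h : Wbtw ℝ x y z) :
      ∃ t ∈ Ioo (0 : ℝ) 1, y - x = t • (z - x) := by
    obtain ⟨t, ht, rfl⟩ := Sbtw.mem_image_Ioo ⟨h, fun hyx => hx (hyx ▸ hy), hyz⟩
    exact ⟨t, ht, by rw [AffineMap.lineMap_apply_module', add_sub_cancel_right]⟩
  rcases h_col.wbtw_or_wbtw_or_wbtw with h | h | h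
  · obtain ⟨t, ht, h_eq⟩ := h_of_wbtw hu huv h
    exact ⟨t, ht, Or.inl h_eq⟩
  · obtain ⟨t, ht, h_eq⟩ := h_of_wbtw hv huv.symm h.symm
    exact ⟨t, ht, Or.inr h_eq⟩
  · exact absurd (hP.segment_subset hv hu (mem_segment_iff_wbtw.2 h)) hx

/-- Condition (i): of any two points of disjoint faces of `P` on a common line through `x`, at least
one lies in the relative interior of a facet. -/
def LinesMeetFacetInteriors (P : Set E) (x : E) : Prop :=
  ∀ (F G : Set E) (u v : E), IsExposed ℝ P F → IsExposed ℝ P G → F ∩ G = ∅ →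
    u ∈ F → v ∈ G → Collinear ℝ {x, u, v} →
    ((∃ H, IsFacet P H ∧ u ∈ intrinsicInterior ℝ H) ∨
      (∃ H, IsFacet P H ∧ v ∈ intrinsicInterior ℝ H))

section Facets

variable {P : Set E} {l : {F // IsFacet P F} → E →L[ℝ] ℝ} {b : {F // IsFacet P F} → ℝ}

lemma LinesMeetFacetInteriors.raysMeetFacetInteriors [FiniteDimensional ℝ E]
    [Finite {F // IsFacet P F}] (h_lines : LinesMeetFacetInteriors P x)
    (h : IsFacetDescription P l b) : RaysMeetFacetInteriors l (slack l b x) := by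
  rw [raysMeetFacetInteriors_slack_iff]
  intro u hu v hv t ht huv h_disj
  have h_exposed (S : Set {F // IsFacet P F}) :
      IsExposed ℝ P {w ∈ polyhedron l b | S ⊆ activeSet l b w} := by
    have := isExposed_setOf_subset_activeSet (l := l) (c := b) S
    rwa [← h.eq_polyhedron] at this ⊢
  have h_wbtw : Wbtw ℝ x u v := ⟨t, Ioo_subset_Icc_self ht, by
    rw [AffineMap.lineMap_apply_module', ← huv, sub_add_cancel]⟩
  rw [← h.exists_mem_intrinsicInterior_iff (h.eq_polyhedron.ge hu),
    ← h.exists_mem_intrinsicInterior_iff (h.eq_polyhedron.ge hv)]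
  refine h_lines _ _ u v (h_exposed _) (h_exposed _) ?_ ⟨hu, subset_rfl⟩ ⟨hv, subset_rfl⟩
    h_wbtw.collinear
  exact eq_empty_of_forall_notMem fun w hw => h_disj w hw.1.1 hw.1.2 hw.2.2

lemma RaysMeetFacetInteriors.linesMeetFacetInteriors [FiniteDimensional ℝ E]
    [Finite {F // IsFacet P F}] (h_rays : RaysMeetFacetInteriors l (slack l b x))
    (h : IsFacetDescription P l b) (hP : Convex ℝ P) (hx : x ∉ P) :
    LinesMeetFacetInteriors P x := by
  rw [raysMeetFacetInteriors_slack_iff, ← h.eq_polyhedron] at h_rays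
  intro F G u v hF hG hFG hu hv h_col
  have huP := hF.subset hu
  have hvP := hG.subset hv
  have h_face {H : Set E} (hH : IsExposed ℝ P H) {y w : E} (hy : y ∈ H) (hw : w ∈ P)
      (hyw : activeSet l b y ⊆ activeSet l b w) : w ∈ H :=
    mem_of_isExtreme_of_activeSet_subset (h.eq_polyhedron ▸ hH.isExtreme) hy
      (h.eq_polyhedron.le hw) hyw
  have h_disj (w : E) (hw : w ∈ P) (huw : activeSet l b u ⊆ activeSet l b w)
      (hvw : activeSet l b v ⊆ activeSet l b w) : False :=
    hFG.le ⟨h_face hF hu hw huw, h_face hG hv hw hvw⟩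
  have huv : u ≠ v := by
    rintro rfl
    exact h_disj u huP subset_rfl subset_rfl
  rw [h.exists_mem_intrinsicInterior_iff huP, h.exists_mem_intrinsicInterior_iff hvP]
  obtain ⟨t, ht, h_eq | h_eq⟩ := exists_smul_eq_of_collinear hP hx huP hvP huv h_col
  · exact h_rays u huP v hvP t ht h_eq h_disj
  · exact (h_rays v hvP u huP t ht h_eq fun w hw hvw huw => h_disj w hw huw hvw).symm

namespace IsFacetDescription

lemma linesMeetFacetInteriors_iff [FiniteDimensional ℝ E] [Finite {F // IsFacet P F}]
    (h : IsFacetDescription P l b) (hP : Convex ℝ P) (hx : x ∉ P) :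
    LinesMeetFacetInteriors P x ↔ RaysMeetFacetInteriors l (slack l b x) :=
  ⟨fun h_lines => h_lines.raysMeetFacetInteriors h,
    fun h_rays => h_rays.linesMeetFacetInteriors h hP hx⟩

lemma slack_eq_zero_iff (h : IsFacetDescription P l b) (F : {F // IsFacet P F}) :
    slack l b x F = 0 ↔ x ∈ affineSpan ℝ (F : Set E) := by
  rw [(h.supportsFacet F).mem_affineSpan_iff, slack, sub_eq_zero, eq_comm]

lemma slack_pos_iff (h : IsFacetDescription P l b) (hP : (interior P).Nonempty)
    (F : {F // IsFacet P F}) : 0 < slack l b x F ↔ Beneath P F x := by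
  rw [(h.supportsFacet F).beneath_iff hP, slack, sub_pos]

lemma slack_neg_iff (h : IsFacetDescription P l b) (hP : (interior P).Nonempty)
    (F : {F // IsFacet P F}) : slack l b x F < 0 ↔ Beyond P F x := by
  rw [(h.supportsFacet F).beyond_iff hP, slack, sub_neg]

end IsFacetDescription

end Facets

end LinesThroughPoint

theorem line_interior_iff_beyond_beneath_general (hE : 3 ≤ Module.finrank ℝ E) {T P : Set E}
    (hT : T.Finite) (hP : P = convexHull ℝ T) (h_span : affineSpan ℝ P = ⊤) {x : E}
    (hx : x ∉ P) :
    LinesMeetFacetInteriors P x ↔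
      (∀ F, IsFacet P F → x ∉ affineSpan ℝ F) ∧
        ((∃ F₀, IsFacet P F₀ ∧ Beneath P F₀ x ∧
            ∀ F, IsFacet P F → F ≠ F₀ → Beyond P F x) ∨
          (∃ F₀, IsFacet P F₀ ∧ Beyond P F₀ x ∧
            ∀ F, IsFacet P F → F ≠ F₀ → Beneath P F x)) := by
  have : FiniteDimensional ℝ E := Module.finite_of_finrank_pos (by lia)
  have : Finite {F // IsFacet P F} := hP ▸ finite_isFacet_convexHull hT
  have h_conv : Convex ℝ P := hP ▸ convex_convexHull ℝ T
  have h_compact : IsCompact P := hP ▸ hT.isCompact_convexHull ℝ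
  have h_int : (interior P).Nonempty := h_conv.interior_nonempty_iff_affineSpan_eq_top.2 h_span
  obtain ⟨l, b, h⟩ := exists_isFacetDescription (by lia) hT hP h_span
  have h_image : polyhedron l (slack l b x) = (· - x) '' P := by
    rw [polyhedron_slack, ← h.eq_polyhedron]
  have hQ : IsCompact (polyhedron l (slack l b x)) :=
    h_image ▸ h_compact.image (continuous_sub_right x)
  have hQ_ne : (polyhedron l (slack l b x)).Nonempty :=
    h_image ▸ (h_int.mono interior_subset).image _
  have h0 : (0 : E) ∉ polyhedron l (slack l b x) := by
    simpa [h_image, sub_eq_zero] using hx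
  rw [h.linesMeetFacetInteriors_iff h_conv hx,
    raysMeetFacetInteriors_iff hE hQ hQ_ne h0 ((h.isIrredundant h_conv).slack x)]
  simp only [h.slack_eq_zero_iff, h.slack_pos_iff h_int, h.slack_neg_iff h_int, ne_eq,
    Subtype.forall, Subtype.exists, Subtype.mk.injEq, exists_prop]

/-- Lemma `lem:radon`, equivalence part. Let `𝒫 ⊂ ℝ^d` be a
full-dimensional polytope, `d ≥ 3`, and `x` a point in its exterior.  The
following are equivalent: (i) every line through `x` meeting two disjoint
(exposed) faces `F`, `G` of `𝒫` at `u ∈ F`, `v ∈ G` has `u` or `v` in the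
relative interior of a facet; (ii) `x` lies on no affine hull of a facet, and
`x` is beyond all facets except exactly one, or beneath all facets except
exactly one. -/
theorem line_interior_iff_beyond_beneath
    (d : ℕ) (hd : 3 ≤ d) (s : Finset (EuclideanSpace ℝ (Fin d)))
    (P : Set (EuclideanSpace ℝ (Fin d)))
    (hP : P = convexHull ℝ (s : Set (EuclideanSpace ℝ (Fin d))))
    (hdim : affineSpan ℝ P = ⊤)
    (x : EuclideanSpace ℝ (Fin d)) (hx : x ∉ P) :
    (∀ (F G : Set (EuclideanSpace ℝ (Fin d))) (u v : EuclideanSpace ℝ (Fin d)),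
        IsExposed ℝ P F → IsExposed ℝ P G → F ∩ G = ∅ →
        u ∈ F → v ∈ G → Collinear ℝ {x, u, v} →
        ((∃ H, IsFacet P H ∧ u ∈ intrinsicInterior ℝ H) ∨
          (∃ H, IsFacet P H ∧ v ∈ intrinsicInterior ℝ H)))
    ↔ ((∀ F, IsFacet P F → x ∉ affineSpan ℝ F) ∧
        ((∃ F₀, IsFacet P F₀ ∧ Beneath P F₀ x ∧
            ∀ F, IsFacet P F → F ≠ F₀ → Beyond P F x) ∨
          (∃ F₀, IsFacet P F₀ ∧ Beyond P F₀ x ∧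
            ∀ F, IsFacet P F → F ≠ F₀ → Beneath P F x))) := by
  exact line_interior_iff_beyond_beneath_general (by simpa using hd) s.finite_toSet hP hdim hx

end BoydMaxwell
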